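/- arXiv:2111.12489 — 4 statements merged into one kernel-verified Lean document; each statement's English description precedes it below -/
import Mathlib

section
/- Let p be an odd prime, s ≥ 1, and 0 ≤ i < j ≤ p^s. Then the minimum distance of C_{i,j}(2p^s, λ_0) equals the minimum of the set {2V_t : i ≤ t ≤ j − 1} ∪ {V_t : j ≤ t ≤ p^s − 1} (the second set being empty when j = p^s). -/
open Polynomial

variable {F : Type} [Field F] [Fintype F] [DecidableEq F]

/-- `d` is the minimum distance (minimum Hamming weight of a nonzero codeword) of `Cset`. -/
def minDistIs {n : ℕ} (Cset : Set (Fin n → F)) (d : ℕ) : Prop :=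
  IsLeast {w : ℕ | ∃ c ∈ Cset, c ≠ 0 ∧ hammingNorm c = w} d

/-- The `i`-th code symbol of `Cset` has locality `r`. -/
def symbolLocality {n : ℕ} (Cset : Set (Fin n → F)) (i : Fin n) (r : ℕ) : Prop :=
  ∃ I : Finset (Fin n), i ∉ I ∧ I.card ≤ r ∧
    ∃ f : ({x : Fin n // x ∈ I} → F) → F, ∀ c ∈ Cset, c i = f (fun j => c j.1)

/-- `Cset` has all-symbol locality `r`. -/
def hasAllSymbolLocality {n : ℕ} (Cset : Set (Fin n → F)) (r : ℕ) : Prop :=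
  ∀ i : Fin n, symbolLocality Cset i r

/-- `r` is the minimum locality of `Cset`. -/
def minLocalityIs {n : ℕ} (Cset : Set (Fin n → F)) (r : ℕ) : Prop :=
  IsLeast {r' : ℕ | hasAllSymbolLocality Cset r'} r

/-- The λ-constacyclic code of length `n` corresponding to the ideal generated by (the image of)
`g` in `F[x]/⟨x^n − λ⟩`, viewed as a set of vectors via the coefficient identification. -/
def codeOfGen (n : ℕ) (lam : F) (g : F[X]) : Set (Fin n → F) :=
  {c | (∑ j : Fin n, Polynomial.C (c j) * X ^ (j : ℕ)) ∈ Ideal.span {g, X ^ n - Polynomial.C lam}}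

/-- The code `C_i(η, p^s, λ₀)`: the λ-constacyclic code of length `η p^s`
generated by `(x^η − λ₀)^i`, where `λ = λ₀^{p^s}`. -/
def Ci (p η s i : ℕ) (lam0 : F) : Set (Fin (η * p ^ s) → F) :=
  codeOfGen (η * p ^ s) (lam0 ^ p ^ s) ((X ^ η - Polynomial.C lam0) ^ i)

/-- The code `C_{i,j}(2p^s, λ₀)` with `λ₀ = δ²`: the λ-constacyclic code of length `2 p^s`
generated by `(x − δ)^i (x + δ)^j`, where `λ = λ₀^{p^s}`. -/
def Cij (p s i j : ℕ) (δ : F) : Set (Fin (2 * p ^ s) → F) :=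
  codeOfGen (2 * p ^ s) ((δ ^ 2) ^ p ^ s) ((X - Polynomial.C δ) ^ i * (X + Polynomial.C δ) ^ j)

/-- `V_t = Π_j (t_j + 1)` over the base-`p` digits `t_j` of `t`. -/
def Vdig (p t : ℕ) : ℕ := ((Nat.digits p t).map (· + 1)).prod

/-- Ceiling division `⌈a / b⌉` of natural numbers. -/
def nceil (a b : ℕ) : ℕ := (a + b - 1) / b

/-- `Cset` is an optimal LRC: for its dimension `k`, minimum distance `d` and minimum
locality `r`, the Singleton-like bound `d = n − k − ⌈k/r⌉ + 2` is met with equality. -/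
def optimalLRC {n : ℕ} (Cset : Set (Fin n → F)) : Prop :=
  ∃ k d r : ℕ, Nat.card Cset = Fintype.card F ^ k ∧ minDistIs Cset d ∧
    minLocalityIs Cset r ∧ (d : ℤ) = (n : ℤ) - (k : ℤ) - (nceil k r : ℤ) + 2


lemma Vdig_step {p : ℕ} (hp : 1 < p) (t a : ℕ) (ha : a < p) :
    Vdig p (p * t + a) = (a + 1) * Vdig p t := by
  unfold Vdig
  rcases Nat.eq_zero_or_pos (p * t + a) with h | h
  · have h1 : a = 0 := by omega
    have h2 : t = 0 := by
      have : p * t = 0 := by omega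
      rcases Nat.mul_eq_zero.mp this with h | h <;> omega
    subst h1 h2; simp
  · rw [Nat.digits_def' hp h]
    have h1 : (p * t + a) % p = a := by rw [Nat.mul_add_mod]; exact Nat.mod_eq_of_lt ha
    have h2 : (p * t + a) / p = t := by
      rw [Nat.mul_add_div (by omega), Nat.div_eq_of_lt ha]; rfl
    rw [h1, h2]; simp

lemma card_expand_le {K : Type} [Field K] {p : ℕ} (hp : 0 < p) (f : K[X]) :
    (expand K p f).support.card ≤ f.support.card := by
  have : (expand K p f).support ⊆ f.support.image (· * p) := by
    intro n hn
    rw [mem_support_iff, coeff_expand hp] at hn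
    split_ifs at hn with h
    · exact Finset.mem_image.mpr ⟨n / p, mem_support_iff.mpr hn, Nat.div_mul_cancel h⟩
    · exact absurd rfl hn
  exact (Finset.card_le_card this).trans Finset.card_image_le

lemma frob_pow {K : Type} [Field K] {p : ℕ} [Fact p.Prime] [CharP K p] (c : K) (t : ℕ) :
    (X - C c) ^ (p * t) = expand K p ((X - C (c ^ p)) ^ t) := by
  rw [pow_mul, sub_pow_char]; simp

lemma card_pow_le {K : Type} [Field K] {p : ℕ} [hp : Fact p.Prime] [CharP K p] (t : ℕ) :
    ∀ c : K, ((X - C c) ^ t).support.card ≤ Vdig p t := by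
  induction t using Nat.strong_induction_on with
  | _ t ih =>
    intro c
    rcases Nat.eq_zero_or_pos t with rfl | h
    · simp only [pow_zero, Vdig, Nat.digits_zero, List.map_nil, List.prod_nil]
      rw [← C_1]
      refine (card_supp_le_succ_natDegree _).trans (by simp)
    · have h1 := hp.out.one_lt
      have hlt : t % p < p := Nat.mod_lt _ (by omega)
      have e : t = p * (t / p) + t % p := (Nat.div_add_mod t p).symm
      have := ih (t / p) (Nat.div_lt_self h h1) (c ^ p)
      rw [e, Vdig_step h1 _ _ hlt, pow_add, frob_pow, mul_comm (t % p + 1)]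
      refine card_support_mul_le.trans (Nat.mul_le_mul ((card_expand_le (by omega) _).trans this) ?_)
      refine (card_supp_le_succ_natDegree _).trans ?_
      simp [natDegree_pow]

/-- number of residue classes in the support -/
lemma classes_ge {K : Type} [Field K] {p : ℕ} [hp : Fact p.Prime] [CharP K p] (c : K) (hc : c ≠ 0)
    (k : ℕ) : ∀ (f : K[X]), f ≠ 0 → ∀ a, (∃ u, f = (X - C c) ^ a * u ∧ u.eval c ≠ 0) → a % p = k →
      k + 1 ≤ (f.support.image (· % p)).card := by
  have h1 := hp.out.one_lt
  induction k with
  | zero =>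
    intro f hf a _ _
    have : f.support.Nonempty := by simpa using hf
    exact Finset.card_pos.mpr (this.image _)
  | succ k ih =>
    rintro f hf a ⟨u, hu, huc⟩ hak
    obtain ⟨n0, hn0⟩ : f.support.Nonempty := by simpa using hf
    obtain ⟨b, rfl⟩ : ∃ b, a = b + 1 := ⟨a - 1, by
      rcases a with _ | a
      · simp at hak
      · rfl⟩
    set g := X * derivative f - C (n0 : K) * f with hg
    set v := C ((b + 1 : ℕ) : K) * X * u + (X - C c) * (X * derivative u - C (n0 : K) * u) with hv
    have hgv : g = (X - C c) ^ b * v := by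
      rw [hg, hv, hu, derivative_mul, derivative_pow]
      simp
      ring
    have hbk : b % p = k := by
      have := Nat.div_add_mod (b + 1) p
      have hkp : k + 1 < p := hak ▸ Nat.mod_lt _ (by omega)
      have e : b = k + p * ((b + 1) / p) := by omega
      rw [e, Nat.add_mul_mod_self_left]
      exact Nat.mod_eq_of_lt (by omega)
    have hvc : v.eval c ≠ 0 := by
      have : v.eval c = ((b + 1 : ℕ) : K) * c * u.eval c := by simp [hv]
      rw [this]
      refine mul_ne_zero (mul_ne_zero ?_ hc) huc
      intro h0
      rw [CharP.cast_eq_zero_iff K p] at h0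
      have := Nat.mod_eq_zero_of_dvd h0
      omega
    have hg0 : g ≠ 0 := by
      rw [hgv]
      refine mul_ne_zero (pow_ne_zero _ (X_sub_C_ne_zero c)) ?_
      rintro h; rw [h] at hvc; simp at hvc
    have hlow := ih g hg0 b ⟨v, hgv, hvc⟩ hbk
    have hcoef : ∀ n, g.coeff n = ((n : K) - n0) * f.coeff n := by
      intro n
      rw [hg]
      rcases n with _ | n
      · simp
      · simp [coeff_X_mul, coeff_derivative]; ring
    have hsub : g.support.image (· % p) ⊆ (f.support.image (· % p)).erase (n0 % p) := by
      intro r hr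
      obtain ⟨n, hn, rfl⟩ := Finset.mem_image.mp hr
      rw [mem_support_iff, hcoef] at hn
      refine Finset.mem_erase.mpr ⟨?_, Finset.mem_image.mpr ⟨n, ?_, rfl⟩⟩
      · intro h
        apply left_ne_zero_of_mul hn
        rw [sub_eq_zero]
        exact (CharP.natCast_eq_natCast K p).mpr h
      · exact mem_support_iff.mpr (right_ne_zero_of_mul hn)
    have h2 := Finset.card_le_card hsub
    have hm : n0 % p ∈ f.support.image (· % p) := Finset.mem_image.mpr ⟨n0, hn0, rfl⟩
    rw [Finset.card_erase_of_mem hm] at h2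
    have := Finset.card_pos.mpr ⟨_, hm⟩
    omega

/-- the `r`-th component -/
noncomputable def Rcomp {K : Type} [Field K] (p r : ℕ) (f : K[X]) : K[X] :=
  divX (contract p (X ^ (p - r) * f))

lemma coeff_Rcomp {K : Type} [Field K] {p r : ℕ} (hr : r < p) (f : K[X]) (n : ℕ) :
    (Rcomp p r f).coeff n = f.coeff (p * n + r) := by
  rw [Rcomp, coeff_divX, coeff_contract (by omega)]
  have : (n + 1) * p = (p * n + r) + (p - r) := by
    rw [add_mul, mul_comm]; omega
  rw [this, coeff_X_pow_mul]

lemma Rcomp_mul {K : Type} [Field K] {p r : ℕ} (hr : r < p) (f g : K[X]) :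
    Rcomp p r (f * expand K p g) = Rcomp p r f * g := by
  have key : ∀ f : K[X], Rcomp p r f * X = contract p (X ^ (p - r) * f) := by
    intro f
    have := divX_mul_X_add (contract p (X ^ (p - r) * f))
    rw [coeff_contract (by omega), zero_mul, coeff_X_pow_mul', if_neg (by omega)] at this
    simpa [Rcomp] using this
  apply mul_right_cancel₀ (X_ne_zero (R := K))
  rw [key, ← mul_assoc, contract_mul_expand (by omega), ← key]
  ring

lemma card_Rcomp {K : Type} [Field K] {p r : ℕ} (hr : r < p) (f : K[X]) :
    (f.support.filter (fun n => n % p = r)).card = (Rcomp p r f).support.card := by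
  symm
  apply Finset.card_bij (fun n _ => p * n + r)
  · intro n hn
    rw [mem_support_iff, coeff_Rcomp hr] at hn
    simp [hn, Nat.mod_eq_of_lt hr]
  · intro a _ b _ h
    have : p * a = p * b := by omega
    exact Nat.eq_of_mul_eq_mul_left (by omega) this
  · intro n hn
    obtain ⟨h1, h2⟩ := Finset.mem_filter.mp hn
    have e := Nat.div_add_mod n p
    rw [h2] at e
    refine ⟨n / p, ?_, e⟩
    rw [mem_support_iff, coeff_Rcomp hr, e]
    exact mem_support_iff.mp h1

lemma Rcomp_ne {K : Type} [Field K] {p r : ℕ} (hr : r < p) (f : K[X])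
    (h : r ∈ f.support.image (· % p)) : Rcomp p r f ≠ 0 := by
  obtain ⟨n, hn, rfl⟩ := Finset.mem_image.mp h
  intro h0
  have := coeff_Rcomp hr f (n / p)
  rw [h0, Nat.div_add_mod] at this
  exact mem_support_iff.mp hn (by simpa using this.symm)

lemma mult_Rcomp {K : Type} [Field K] {p r : ℕ} [hp : Fact p.Prime] [CharP K p] (hr : r < p)
    (f : K[X]) (h : Rcomp p r f ≠ 0) (c : K) :
    f.rootMultiplicity c / p ≤ (Rcomp p r f).rootMultiplicity (c ^ p) := by
  rw [le_rootMultiplicity_iff h]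
  have h1 : (X - C c) ^ (p * (f.rootMultiplicity c / p)) ∣ f :=
    (pow_dvd_pow _ (Nat.mul_div_le _ _)).trans (pow_rootMultiplicity_dvd f c)
  obtain ⟨g, hg⟩ := h1
  rw [frob_pow, mul_comm] at hg
  have := Rcomp_mul hr g ((X - C (c ^ p)) ^ (f.rootMultiplicity c / p))
  rw [← hg] at this
  rw [this]
  exact dvd_mul_left _ _

lemma classes_ge' {K : Type} [Field K] {p : ℕ} [hp : Fact p.Prime] [CharP K p] (c : K) (hc : c ≠ 0)
    (f : K[X]) (hf : f ≠ 0) :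
    f.rootMultiplicity c % p + 1 ≤ (f.support.image (· % p)).card := by
  obtain ⟨q, h1, h2⟩ := f.exists_eq_pow_rootMultiplicity_mul_and_not_dvd hf c
  refine classes_ge c hc _ f hf _ ⟨q, h1, ?_⟩ rfl
  intro h
  exact h2 (dvd_iff_isRoot.mpr h)

lemma lower {K : Type} [Field K] {p : ℕ} [hp : Fact p.Prime] [CharP K p] (s : ℕ) :
    ∀ (α β : K), α ≠ 0 → β ≠ 0 → α ≠ β → ∀ f : K[X], f ≠ 0 → f.natDegree < 2 * p ^ s →
      ∃ t < p ^ s, (max (f.rootMultiplicity α) (f.rootMultiplicity β) ≤ t ∧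
          Vdig p t ≤ f.support.card) ∨
        (min (f.rootMultiplicity α) (f.rootMultiplicity β) ≤ t ∧
          2 * Vdig p t ≤ f.support.card) := by
  have h1 := hp.out.one_lt
  induction s with
  | zero =>
    intro α β hα hβ hne f hf hd
    have hd' : f.natDegree ≤ 1 := by simpa using Nat.le_of_lt_succ (by simpa using hd)
    have hV : Vdig p 0 = 1 := by simp [Vdig]
    have hpos : 1 ≤ f.support.card := by
      have : f.support.Nonempty := by simpa using hf
      exact Finset.card_pos.mpr this
    refine ⟨0, by simp, ?_⟩
    rw [hV]
    have two : ∀ c : K, c ≠ 0 → f.IsRoot c → 2 ≤ f.support.card := by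
      intro c hc hr
      have h0 : f.rootMultiplicity c ≠ 0 := ((rootMultiplicity_pos hf).mpr hr).ne'
      by_contra hlt
      obtain ⟨n, a, ha⟩ := card_support_le_one_iff_monomial.mp (by omega : f.support.card ≤ 1)
      rw [ha, IsRoot.def, eval_monomial] at hr
      have : a = 0 := by
        rcases mul_eq_zero.mp hr with h | h
        · exact h
        · exact absurd h (pow_ne_zero _ hc)
      rw [this] at ha; simp at ha; exact hf ha
    by_cases ha : f.IsRoot α
    · right
      refine ⟨?_, by simpa using two α hα ha⟩
      by_cases hb : f.IsRoot β
      · exfalso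
        have hcard := card_roots' f
        have : ({α, β} : Multiset K) ≤ f.roots := by
          rw [Multiset.le_iff_subset (by simp [hne])]
          intro x hx
          simp at hx
          rcases hx with rfl | rfl
          · exact (mem_roots hf).mpr ha
          · exact (mem_roots hf).mpr hb
        have := Multiset.card_le_card this
        simp at this
        omega
      · rw [rootMultiplicity_eq_zero hb]; simp
    · by_cases hb : f.IsRoot β
      · right
        refine ⟨?_, by simpa using two β hβ hb⟩
        rw [rootMultiplicity_eq_zero ha]; simp
      · left
        rw [rootMultiplicity_eq_zero ha, rootMultiplicity_eq_zero hb]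
        exact ⟨by simp, hpos⟩
  | succ s ih =>
    intro α β hα hβ hne f hf hd
    set S := f.support.image (· % p) with hS
    have hSlt : ∀ r ∈ S, r < p := by
      intro r hr
      obtain ⟨n, _, rfl⟩ := Finset.mem_image.mp hr
      exact Nat.mod_lt _ (by omega)
    have hSne : S.Nonempty := by
      have : f.support.Nonempty := by simpa using hf
      exact this.image _
    obtain ⟨r, hrS, hmin⟩ := Finset.exists_min_image S (fun r => (Rcomp p r f).support.card) hSne
    have hr := hSlt r hrS
    have hw : S.card * (Rcomp p r f).support.card ≤ f.support.card := by
      rw [Finset.card_eq_sum_card_image (· % p) f.support, ← smul_eq_mul]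
      apply Finset.card_nsmul_le_sum
      intro x hx
      rw [card_Rcomp (hSlt x hx)]
      exact hmin x hx
    have hg0 := Rcomp_ne hr f hrS
    have hgd : (Rcomp p r f).natDegree < 2 * p ^ s := by
      by_contra hcon
      push Not at hcon
      have hlead : (Rcomp p r f).coeff (Rcomp p r f).natDegree ≠ 0 := by
        simpa using hg0
      rw [coeff_Rcomp hr] at hlead
      have h2 := le_natDegree_of_ne_zero hlead
      have h3 : p * (2 * p ^ s) ≤ p * (Rcomp p r f).natDegree := Nat.mul_le_mul_left _ hcon
      have h4 : p * (2 * p ^ s) = 2 * p ^ (s + 1) := by ring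
      omega
    have hinj : α ^ p ≠ β ^ p := fun h => hne (frobenius_inj K p h)
    obtain ⟨t, ht, hcase⟩ := ih (α ^ p) (β ^ p) (pow_ne_zero _ hα) (pow_ne_zero _ hβ) hinj _ hg0 hgd
    have hA := mult_Rcomp hr f hg0 α
    have hB := mult_Rcomp hr f hg0 β
    have cA := classes_ge' (p := p) α hα f hf
    have cB := classes_ge' (p := p) β hβ f hf
    have eA := Nat.div_add_mod (f.rootMultiplicity α) p
    have eB := Nat.div_add_mod (f.rootMultiplicity β) p
    have lA := Nat.mod_lt (f.rootMultiplicity α) (by omega : p > 0)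
    have lB := Nat.mod_lt (f.rootMultiplicity β) (by omega : p > 0)
    set a := f.rootMultiplicity α
    set b := f.rootMultiplicity β
    set m := max (a % p) (b % p) with hm
    have hmp : m < p := max_lt lA lB
    rw [← hS] at cA cB
    have hmS : m + 1 ≤ S.card := by omega
    have boundA : a / p ≤ t → a ≤ p * t + m := by
      intro h
      have := Nat.mul_le_mul_left p h
      omega
    have boundB : b / p ≤ t → b ≤ p * t + m := by
      intro h
      have := Nat.mul_le_mul_left p h
      omega
    refine ⟨p * t + m, ?_, ?_⟩
    · have : p * (t + 1) ≤ p * p ^ s := Nat.mul_le_mul_left _ ht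
      rw [pow_succ, mul_comm (p ^ s)]
      rw [mul_add] at this
      omega
    · rw [Vdig_step h1 _ _ hmp]
      rcases hcase with ⟨hm1, hV⟩ | ⟨hm1, hV⟩
      · left
        refine ⟨?_, (Nat.mul_le_mul hmS hV).trans hw⟩
        have := boundA (by omega)
        have := boundB (by omega)
        omega
      · right
        refine ⟨?_, ?_⟩
        · rcases min_le_iff.mp hm1 with h | h
          · have := boundA (by omega)
            omega
          · have := boundB (by omega)
            omega
        · calc 2 * ((m + 1) * Vdig p t) = (m + 1) * (2 * Vdig p t) := by ring
            _ ≤ _ := (Nat.mul_le_mul hmS hV).trans hw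

lemma toPoly_coeff {K : Type} [Field K] {n : ℕ} (c : Fin n → K) (k : Fin n) :
    (∑ j : Fin n, C (c j) * X ^ (j : ℕ)).coeff k = c k := by
  rw [finsetSum_coeff]
  simp only [coeff_C_mul, coeff_X_pow, mul_ite, mul_one, mul_zero, Fin.val_inj]
  simp

lemma toPoly_coeff' {K : Type} [Field K] {n : ℕ} (c : Fin n → K) (k : ℕ) (hk : n ≤ k) :
    (∑ j : Fin n, C (c j) * X ^ (j : ℕ)).coeff k = 0 := by
  rw [finsetSum_coeff]
  apply Finset.sum_eq_zero
  intro j _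
  rw [coeff_C_mul, coeff_X_pow, if_neg (by have := j.2; omega), mul_zero]

lemma toPoly_card {K : Type} [Field K] [DecidableEq K] {n : ℕ} (c : Fin n → K) :
    hammingNorm c = (∑ j : Fin n, C (c j) * X ^ (j : ℕ)).support.card := by
  unfold hammingNorm
  apply Finset.card_bij (fun (j : Fin n) _ => (j : ℕ))
  · intro j hj
    rw [mem_support_iff, toPoly_coeff]
    simpa using hj
  · intro a _ b _ h
    exact Fin.ext h
  · intro k hk
    rw [mem_support_iff] at hk
    have hlt : k < n := by
      by_contra h
      exact hk (toPoly_coeff' c k (by omega))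
    exact ⟨⟨k, hlt⟩, by simpa [toPoly_coeff c ⟨k, hlt⟩] using (toPoly_coeff c ⟨k, hlt⟩) ▸ hk, rfl⟩

lemma toPoly_surj {K : Type} [Field K] {n : ℕ} (f : K[X]) (hf : f.natDegree < n) :
    (∑ j : Fin n, C (f.coeff j) * X ^ (j : ℕ)) = f := by
  ext k
  by_cases hk : k < n
  · exact toPoly_coeff (fun j : Fin n => f.coeff j) ⟨k, hk⟩
  · rw [toPoly_coeff' (fun j : Fin n => f.coeff j) k (by omega),
      coeff_eq_zero_of_natDegree_lt (by omega)]

lemma mem_Cij {K : Type} [Field K] {p : ℕ} [hp : Fact p.Prime] [CharP K p] (s i j : ℕ)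
    (hi : i ≤ p ^ s) (hj : j ≤ p ^ s) (δ : K) (f : K[X]) :
    f ∈ Ideal.span {(X - C δ) ^ i * (X + C δ) ^ j, X ^ (2 * p ^ s) - C ((δ ^ 2) ^ p ^ s)} ↔
      (X - C δ) ^ i * (X + C δ) ^ j ∣ f := by
  have e : (X ^ (2 * p ^ s) - C ((δ ^ 2) ^ p ^ s) : K[X]) =
      (X - C δ) ^ p ^ s * (X + C δ) ^ p ^ s := by
    rw [← mul_pow, pow_mul, C_pow, ← sub_pow_char_pow, C_pow]
    congr 1; ring
  have hd : (X - C δ) ^ i * (X + C δ) ^ j ∣ (X ^ (2 * p ^ s) - C ((δ ^ 2) ^ p ^ s) : K[X]) := by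
    rw [e]; exact mul_dvd_mul (pow_dvd_pow _ hi) (pow_dvd_pow _ hj)
  constructor
  · intro h
    obtain ⟨a, b, hab⟩ := Ideal.mem_span_pair.mp h
    rw [← hab]
    exact dvd_add (dvd_mul_left _ _) (hd.mul_left _)
  · intro h
    exact Ideal.mem_of_dvd _ h (Ideal.subset_span (by simp))

lemma upper {K : Type} [Field K] {p : ℕ} [hp : Fact p.Prime] [CharP K p] (s i j t : ℕ)
    (hj : j ≤ p ^ s) (hij : i < j) (hit : i ≤ t) (ht : t < p ^ s) (δ : K) :
    ∃ f : K[X], f ≠ 0 ∧ f.natDegree < 2 * p ^ s ∧ (X - C δ) ^ i * (X + C δ) ^ j ∣ f ∧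
      f.support.card ≤ if t < j then 2 * Vdig p t else Vdig p t := by
  have hX : (X + C δ : K[X]) = X - C (-δ) := by simp
  split_ifs with h
  · refine ⟨(X - C δ) ^ t * (X + C δ) ^ p ^ s, ?_, ?_, ?_, ?_⟩
    · rw [hX]
      exact mul_ne_zero (pow_ne_zero _ (X_sub_C_ne_zero _)) (pow_ne_zero _ (X_sub_C_ne_zero _))
    · refine (natDegree_mul_le).trans_lt ?_
      rw [natDegree_pow, natDegree_pow, natDegree_X_sub_C, natDegree_X_add_C]
      omega
    · exact mul_dvd_mul (pow_dvd_pow _ hit) (pow_dvd_pow _ hj)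
    · rw [mul_comm 2]
      refine card_support_mul_le.trans (Nat.mul_le_mul (card_pow_le t δ) ?_)
      rw [add_pow_char_pow, ← C_pow]
      refine (Finset.card_le_card support_add).trans ((Finset.card_union_le _ _).trans ?_)
      have h1 := card_support_C_mul_X_pow_le_one (c := (1 : K)) (n := p ^ s)
      have h2 := card_support_C_mul_X_pow_le_one (c := (δ ^ p ^ s : K)) (n := 0)
      simp only [map_one, one_mul, pow_zero, mul_one] at h1 h2
      omega
  · refine ⟨expand K 2 ((X - C (δ ^ 2)) ^ t), ?_, ?_, ?_, ?_⟩
    · rw [expand_ne_zero (by norm_num)]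
      exact pow_ne_zero _ (X_sub_C_ne_zero _)
    · rw [natDegree_expand, natDegree_pow, natDegree_X_sub_C]
      omega
    · have : expand K 2 ((X - C (δ ^ 2)) ^ t) = (X - C δ) ^ t * (X + C δ) ^ t := by
        rw [← mul_pow]; simp; congr 1; ring
      rw [this]
      exact mul_dvd_mul (pow_dvd_pow _ hit) (pow_dvd_pow _ (by omega))
    · exact (card_expand_le (by norm_num) _).trans (card_pow_le t _)

/-- For odd prime `p`, `s ≥ 1` and `0 ≤ i < j ≤ p^s`, the minimum distance of
`C_{i,j}(2p^s, λ₀)` equals `min ({2V_t : i ≤ t ≤ j−1} ∪ {V_t : j ≤ t ≤ p^s−1})`. -/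
theorem stmt8 {p m : ℕ} (hp : p.Prime) (hp2 : p ≠ 2) (hm : 1 ≤ m)
    {F : Type} [Field F] [Fintype F] [DecidableEq F] (hcard : Fintype.card F = p ^ m)
    (s : ℕ) (hs : 1 ≤ s) (δ : F) (hδ : δ ≠ 0)
    (i j : ℕ) (hij : i < j) (hj : j ≤ p ^ s) :
    minDistIs (Cij p s i j δ)
      (Finset.inf' (Finset.Icc i (p ^ s - 1))
        (Finset.nonempty_Icc.mpr (Nat.le_pred_of_lt (lt_of_lt_of_le hij hj)))
        (fun t => if t < j then 2 * Vdig p t else Vdig p t)) := by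
  haveI : Fact p.Prime := ⟨hp⟩
  haveI : CharP F p := charP_of_card_eq_prime_pow hcard
  have hps : 0 < p ^ s := pow_pos hp.pos s
  have h2 : (2 : F) ≠ 0 := by
    intro h
    have h' : ((2 : ℕ) : F) = 0 := by exact_mod_cast h
    rw [CharP.cast_eq_zero_iff F p] at h'
    exact hp2 ((Nat.prime_dvd_prime_iff_eq hp Nat.prime_two).mp h')
  have hne : δ ≠ -δ := by
    intro h
    have : 2 * δ = 0 := by linear_combination h
    exact (mul_ne_zero h2 hδ) this
  have hX : (X + C δ : F[X]) = X - C (-δ) := by simp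
  set D := Finset.inf' (Finset.Icc i (p ^ s - 1))
        (Finset.nonempty_Icc.mpr (Nat.le_pred_of_lt (lt_of_lt_of_le hij hj)))
        (fun t => if t < j then 2 * Vdig p t else Vdig p t) with hD
  have low : D ∈ lowerBounds {w : ℕ | ∃ c ∈ Cij p s i j δ, c ≠ 0 ∧ hammingNorm c = w} := by
    rintro w ⟨c, hc, hc0, rfl⟩
    have hdvd := (mem_Cij s i j (by omega) hj δ _).mp hc
    rw [toPoly_card]
    set f := ∑ k, C (c k) * X ^ (k : ℕ) with hf
    have hf0 : f ≠ 0 := by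
      intro h
      apply hc0
      funext k
      rw [← toPoly_coeff c k, ← hf, h]; simp
    have hfd : f.natDegree < 2 * p ^ s := by
      by_contra h
      have := toPoly_coeff' c f.natDegree (by omega)
      rw [← hf] at this
      simp at this
      exact hf0 this
    obtain ⟨t, ht, hcase⟩ := lower (p := p) s δ (-δ) hδ (neg_ne_zero.mpr hδ) hne f hf0 hfd
    have ha : i ≤ f.rootMultiplicity δ :=
      (le_rootMultiplicity_iff hf0).mpr ((dvd_mul_right _ _).trans hdvd)
    have hb : j ≤ f.rootMultiplicity (-δ) :=
      (le_rootMultiplicity_iff hf0).mpr (hX ▸ (dvd_mul_left _ _).trans hdvd)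
    have hit : i ≤ t := by
      rcases hcase with ⟨h, _⟩ | ⟨h, _⟩ <;> omega
    have hle : D ≤ if t < j then 2 * Vdig p t else Vdig p t :=
      Finset.inf'_le (fun t => if t < j then 2 * Vdig p t else Vdig p t)
        (Finset.mem_Icc.mpr ⟨hit, by omega⟩)
    refine hle.trans ?_
    rcases hcase with ⟨h, hV⟩ | ⟨h, hV⟩
    · rw [if_neg (by omega)]; exact hV
    · split_ifs
      · exact hV
      · omega
  refine ⟨?_, low⟩
  obtain ⟨t, ht, hDt⟩ := Finset.exists_mem_eq_inf' (s := Finset.Icc i (p ^ s - 1))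
    (Finset.nonempty_Icc.mpr (Nat.le_pred_of_lt (lt_of_lt_of_le hij hj)))
    (fun t => if t < j then 2 * Vdig p t else Vdig p t)
  obtain ⟨ht1, ht2⟩ := Finset.mem_Icc.mp ht
  obtain ⟨f, hf0, hfd, hdvd, hcd⟩ := upper (p := p) s i j t hj hij ht1 (by omega) δ
  have hs := toPoly_surj f hfd
  have hmem : (fun k : Fin (2 * p ^ s) => f.coeff k) ∈ Cij p s i j δ := by
    change (∑ k : Fin (2 * p ^ s), C (f.coeff k) * X ^ (k : ℕ)) ∈
      (Ideal.span {(X - C δ) ^ i * (X + C δ) ^ j, X ^ (2 * p ^ s) - C ((δ ^ 2) ^ p ^ s)} : Ideal F[X])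
    rw [hs]
    exact (mem_Cij s i j (by omega) hj δ _).mpr hdvd
  have hc0 : (fun k : Fin (2 * p ^ s) => f.coeff k) ≠ 0 := by
    intro h
    apply hf0
    rw [← hs]
    apply Finset.sum_eq_zero
    intro k _
    have : f.coeff k = 0 := congrFun h k
    rw [this]; simp
  refine ⟨_, hmem, hc0, le_antisymm ?_ (low ⟨_, hmem, hc0, rfl⟩)⟩
  rw [toPoly_card, hs]
  exact hcd.trans hDt.ge
end

section
/- Let p be a prime, m ≥ 1, s ≥ 2, η a positive integer coprime to p, and λ_0 a nonzero element of F_{p^m} such that x^η − λ_0 is irreducible over F_{p^m}. If for some 0 ≤ i ≤ p^s the code C_i(η, p^s, λ_0) is an optimal LRC, then at least one of the following holds: (a) p = 2, η = 1 and i = 2^{s−1} + 1; (b) p is odd, η = 1 and i = p^{s−1} + 1; (c) i = p^{s−ℓ−1} for some 0 ≤ ℓ ≤ s − 1; (d) p is odd, η = 1 and i = 2; (e) η = 1 and i = p^s − 1. -/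
open Polynomial

variable {F : Type} [Field F] [Fintype F] [DecidableEq F]

set_option linter.unusedSectionVars false
set_option linter.unusedVariables false

noncomputable def pcmp (p a : ℕ) (H : F[X]) : F[X] :=
  ∑ k ∈ Finset.range (H.natDegree + 1), monomial k (H.coeff (p * k + a))

lemma coeff_cmp {p : ℕ} (hp : 0 < p) (a : ℕ) (H : F[X]) (k : ℕ) :
    (pcmp p a H).coeff k = H.coeff (p * k + a) := by
  unfold pcmp
  rw [finsetSum_coeff]
  simp only [coeff_monomial]
  rw [Finset.sum_ite_eq' (Finset.range (H.natDegree + 1)) k (fun k => H.coeff (p * k + a))]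
  split_ifs with h
  · rfl
  · rw [Finset.mem_range, not_lt] at h
    symm
    apply coeff_eq_zero_of_natDegree_lt
    nlinarith

lemma cmp_expand_mul {p : ℕ} (hp : 0 < p) {a : ℕ} (ha : a < p) (P H : F[X]) :
    pcmp p a (expand F p P * H) = P * pcmp p a H := by
  induction P using Polynomial.induction_on' with
  | add P Q h1 h2 =>
    have key : pcmp p a ((expand F p P * H) + (expand F p Q * H)) =
        pcmp p a (expand F p P * H) + pcmp p a (expand F p Q * H) := by
      ext k; simp only [coeff_cmp hp, coeff_add]
    rw [map_add, add_mul, key, h1, h2, add_mul]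
  | monomial m c =>
    ext k
    rw [coeff_cmp hp, expand_monomial, ← C_mul_X_pow_eq_monomial, ← C_mul_X_pow_eq_monomial,
      mul_assoc, mul_assoc, coeff_C_mul, coeff_C_mul, coeff_X_pow_mul', coeff_X_pow_mul',
      coeff_cmp hp]
    by_cases h : m ≤ k
    · obtain ⟨t, rfl⟩ := Nat.exists_eq_add_of_le h
      have e : p * (m + t) + a = m * p + (p * t + a) := by ring
      rw [if_pos h, e, if_pos (by omega)]
      simp
    · have : ¬ m * p ≤ p * k + a := by
        intro h2
        have : (k + 1) * p ≤ m * p := Nat.mul_le_mul_right _ (by omega)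
        nlinarith
      rw [if_neg h, if_neg this]

lemma sum_cmp {p : ℕ} (hp : 0 < p) (H : F[X]) :
    ∑ a ∈ Finset.range p, X ^ a * expand F p (pcmp p a H) = H := by
  ext n
  rw [finsetSum_coeff]
  rw [Finset.sum_eq_single (n % p)]
  · rw [coeff_X_pow_mul', if_pos (Nat.mod_le _ _), coeff_expand hp, if_pos (Nat.dvd_sub_mod n),
      coeff_cmp hp]
    congr 1
    rw [Nat.mul_div_cancel' (Nat.dvd_sub_mod n)]
    have := Nat.mod_le n p
    omega
  · intro b hb hne
    rw [Finset.mem_range] at hb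
    rw [coeff_X_pow_mul']
    split_ifs with h
    · rw [coeff_expand hp, if_neg]
      rintro ⟨t, ht⟩
      apply hne
      have : n = b + p * t := by omega
      rw [this, Nat.add_mul_mod_self_left, Nat.mod_eq_of_lt hb]
    · rfl
  · intro h
    exact absurd (Finset.mem_range.2 (Nat.mod_lt _ hp)) h

lemma wt_cmp {p : ℕ} (hp : 0 < p) (H : F[X]) :
    ∑ a ∈ Finset.range p, (pcmp p a H).support.card ≤ H.support.card := by
  rw [Finset.card_eq_sum_card_fiberwise (f := fun n => n % p) (s := H.support)
    (t := Finset.range p) (fun n _ => by simpa using Nat.mod_lt _ hp)]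
  apply Finset.sum_le_sum
  intro a ha
  rw [Finset.mem_range] at ha
  apply Finset.card_le_card_of_injOn (fun k => p * k + a)
  · intro k hk
    simp only [Finset.mem_coe, mem_support_iff, coeff_cmp hp] at hk
    simp only [Finset.coe_filter, mem_support_iff, Set.mem_ofPred_eq]
    exact ⟨hk, by rw [Nat.mul_add_mod, Nat.mod_eq_of_lt ha]⟩
  · intro k _ l _ h
    simp only at h
    exact Nat.eq_of_mul_eq_mul_left hp (by omega)

lemma cmp_theta {p : ℕ} [Fact p.Prime] [CharP F p] (a b : ℕ) (H : F[X]) :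
    pcmp p b (X * derivative H - C (a : F) * H) = C ((b : F) - (a : F)) * pcmp p b H := by
  have hp : 0 < p := (Fact.out : p.Prime).pos
  ext k
  rw [coeff_cmp hp, coeff_sub, coeff_C_mul, coeff_C_mul, coeff_cmp hp]
  have : (X * derivative H).coeff (p * k + b) = (b : F) * H.coeff (p * k + b) := by
    rcases hn : p * k + b with _ | n
    · simp
      left
      have : b = 0 := by omega
      simp [this]
    · rw [coeff_X_mul, coeff_derivative, mul_comm]
      congr 1
      have : ((n + 1 : ℕ) : F) = ((p * k + b : ℕ) : F) := by rw [hn]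
      push_cast at this
      rw [this]; simp
  rw [this]; ring

lemma few_cmp {p : ℕ} [Fact p.Prime] [CharP F p] (P : F[X]) (hX : IsCoprime P X) (c : ℕ) :
    ∀ K : F[X], P ^ c ∣ K →
      ((Finset.range p).filter (fun a => pcmp p a K ≠ 0)).card ≤ c →
      ∀ a < p, P ∣ expand F p (pcmp p a K) := by
  have hp : 0 < p := (Fact.out : p.Prime).pos
  induction c with
  | zero =>
    intro K _ h a ha
    rw [Nat.le_zero, Finset.card_eq_zero] at h
    have : pcmp p a K = 0 := by
      by_contra hh
      have : a ∈ (Finset.range p).filter (fun a => pcmp p a K ≠ 0) := by simp [ha, hh]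
      rw [h] at this; simp at this
    rw [this]; simp
  | succ c ih =>
    intro K hK hcard a ha
    by_cases h0 : pcmp p a K = 0
    · rw [h0]; simp
    have hK2 : P ^ c ∣ X * derivative K - C (a : F) * K := by
      obtain ⟨Q, rfl⟩ := hK
      rw [derivative_mul, derivative_pow_succ]
      exact ⟨X * (C ((c : F) + 1) * derivative P * Q + P * derivative Q) - C (a : F) * (P * Q),
        by ring⟩
    have hne : ∀ b < p, b ≠ a → ((b : F) - (a : F)) ≠ 0 := by
      intro b hb hba h
      rw [sub_eq_zero] at h
      exact hba (CharP.natCast_injOn_Iio F p hb ha h)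
    have hsub : ((Finset.range p).filter
        (fun b => pcmp p b (X * derivative K - C (a : F) * K) ≠ 0)).card ≤ c := by
      have hmem : a ∈ (Finset.range p).filter (fun a => pcmp p a K ≠ 0) := by simp [ha, h0]
      have h1 := Finset.card_erase_of_mem hmem
      have : (Finset.range p).filter
        (fun b => pcmp p b (X * derivative K - C (a : F) * K) ≠ 0) ⊆
          ((Finset.range p).filter (fun a => pcmp p a K ≠ 0)).erase a := by
        intro b hb
        rw [Finset.mem_filter, cmp_theta] at hb
        rw [Finset.mem_erase, Finset.mem_filter]
        refine ⟨?_, hb.1, right_ne_zero_of_mul hb.2⟩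
        rintro rfl
        exact hb.2 (by simp)
      have h2 := Finset.card_le_card this
      omega
    have hoth : ∀ b < p, b ≠ a → P ∣ expand F p (pcmp p b K) := by
      intro b hb hba
      have := ih _ hK2 hsub b hb
      rw [cmp_theta, map_mul, expand_C] at this
      have hu : IsUnit (C ((b : F) - (a : F))) := isUnit_C.2 (hne b hb hba).isUnit
      exact (hu.dvd_mul_left).1 this
    have hs := sum_cmp hp K
    rw [← Finset.add_sum_erase _ _ (Finset.mem_range.2 ha)] at hs
    have hd : P ∣ X ^ a * expand F p (pcmp p a K) := by
      rw [eq_sub_of_add_eq hs]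
      apply dvd_sub
      · exact (dvd_pow_self P (Nat.succ_ne_zero c)).trans hK
      · apply Finset.dvd_sum
        intro b hb
        rw [Finset.mem_erase, Finset.mem_range] at hb
        exact (hoth b hb.2 hb.1).mul_left _
    exact (hX.pow_right).dvd_of_dvd_mul_left hd

lemma dvd_cmp {p : ℕ} [Fact p.Prime] [CharP F p] {η : ℕ} (hη : (η : F) ≠ 0) {μ : F} (hμ : μ ≠ 0)
    (L : F[X]) (h : (X ^ η - C μ) ∣ expand F p L) : (X ^ η - C (μ ^ p)) ∣ L := by
  have hp : 0 < p := (Fact.out : p.Prime).pos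
  have hsq := (separable_X_pow_sub_C μ hη hμ).squarefree
  set f := L.map ((frobeniusEquiv F p).symm : F →+* F) with hf
  have hLf : expand F p L = f ^ p := by
    rw [← map_frobenius_expand, map_expand, hf, Polynomial.map_map]
    have : (frobenius F p).comp ((frobeniusEquiv F p).symm : F →+* F) = RingHom.id F := by
      ext x; simp
    rw [this, Polynomial.map_id]
  rw [hLf, hsq.dvd_pow_iff_dvd hp.ne'] at h
  have h2 := pow_dvd_pow_of_dvd h p
  rw [← hLf, sub_pow_char, ← C_pow] at h2
  obtain ⟨Q, hQ⟩ := h2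
  refine ⟨contract p Q, ?_⟩
  have := contract_mul_expand hp.ne' Q (X ^ η - C (μ ^ p))
  rw [map_sub, map_pow, expand_X, expand_C, ← pow_mul, mul_comm p η, pow_mul, mul_comm Q, ← hQ,
    contract_expand p hp.ne'] at this
  rw [this, mul_comm]

/-- lower bound predicate on weights -/
def LB (F : Type) [Field F] (p η s j w : ℕ) : Prop :=
  ∀ μ : F, μ ≠ 0 → ∀ H : F[X], H ≠ 0 → (∀ n, η * p ^ s ≤ n → H.coeff n = 0) →
    (X ^ η - C μ) ^ j ∣ H → w ≤ H.support.card

lemma LB.mono {p η s j w j' w' : ℕ} (h : LB F p η s j w) (hj : j ≤ j') (hw : w' ≤ w) :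
    LB F p η s j' w' := fun μ hμ H hH hd hdv =>
  hw.trans (h μ hμ H hH hd ((pow_dvd_pow _ hj).trans hdv))

lemma LB_zero (p η s : ℕ) : LB F p η s 0 1 := by
  intro μ _ H hH _ _
  rw [Nat.one_le_iff_ne_zero, Ne, Finset.card_eq_zero, support_eq_empty]
  exact hH

lemma LB_top {p η s : ℕ} (hη : 0 < η) (w : ℕ) : LB F p η s (p ^ s) w := by
  intro μ _ H hH hd hdv
  exfalso
  have h1 := Polynomial.natDegree_le_of_dvd hdv hH
  rw [natDegree_pow, natDegree_X_pow_sub_C] at h1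
  have h2 := hd H.natDegree (by rw [mul_comm]; exact h1)
  exact hH (leadingCoeff_eq_zero.1 h2)

lemma LB_step {p η s J c w w2 : ℕ} [Fact p.Prime] [CharP F p] (hη : (η : F) ≠ 0)
    (h1 : LB F p η s J w) (h2 : LB F p η s (J + 1) w2) {w3 : ℕ}
    (ha : w3 ≤ (c + 1) * w) (hb : w3 ≤ w2) : LB F p η (s + 1) (p * J + c) w3 := by
  have hp : 0 < p := (Fact.out : p.Prime).pos
  intro μ hμ H hH hd hdv
  have hη0 : η ≠ 0 := by rintro rfl; simp at hη
  have hμp : μ ^ p ≠ 0 := pow_ne_zero _ hμ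
  have hE : (X ^ η - C μ) ^ (p * J) = expand F p ((X ^ η - C (μ ^ p)) ^ J) := by
    rw [pow_mul, sub_pow_char, map_pow, map_sub, map_pow, expand_X, expand_C, ← C_pow, ← pow_mul,
      ← pow_mul, mul_comm]
  obtain ⟨Q, hQ⟩ := hdv
  set K := (X ^ η - C μ) ^ c * Q with hKdef
  have hHK : H = expand F p ((X ^ η - C (μ ^ p)) ^ J) * K := by
    rw [hQ, ← hE, hKdef, pow_add]; ring
  have hcmp : ∀ a < p, pcmp p a H = (X ^ η - C (μ ^ p)) ^ J * pcmp p a K := by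
    intro a ha; rw [hHK, cmp_expand_mul hp ha]
  have hdeg : ∀ a, ∀ n, η * p ^ s ≤ n → (pcmp p a H).coeff n = 0 := by
    intro a n hn
    rw [coeff_cmp hp]
    apply hd
    calc η * p ^ (s + 1) = p * (η * p ^ s) := by ring
      _ ≤ p * n := Nat.mul_le_mul_left _ hn
      _ ≤ _ := Nat.le_add_right _ _
  have hex : ∃ a < p, pcmp p a H ≠ 0 := by
    by_contra! hall
    apply hH
    rw [← sum_cmp hp H]
    apply Finset.sum_eq_zero
    intro a ha
    rw [hall a (Finset.mem_range.1 ha)]; simp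
  have hwt := wt_cmp hp H
  by_cases hc : ((Finset.range p).filter (fun a => pcmp p a K ≠ 0)).card ≤ c
  · have hcop : IsCoprime (X ^ η - C μ) (X : F[X]) := by
      refine ⟨-C μ⁻¹, C μ⁻¹ * X ^ (η - 1), ?_⟩
      obtain ⟨e, rfl⟩ := Nat.exists_eq_succ_of_ne_zero hη0
      have : C μ⁻¹ * C μ = (1 : F[X]) := by rw [← C_mul, inv_mul_cancel₀ hμ, C_1]
      simp only [Nat.succ_eq_add_one, Nat.add_sub_cancel]
      linear_combination this
    obtain ⟨a, hap, hane⟩ := hex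
    have hdv := few_cmp (p := p) _ hcop c K (Dvd.intro _ rfl) hc a hap
    have hdv2 := dvd_cmp hη hμ _ hdv
    have := h2 (μ ^ p) hμp (pcmp p a H) hane (hdeg a) (by
      rw [hcmp a hap, pow_succ]; exact mul_dvd_mul_left _ hdv2)
    calc w3 ≤ w2 := hb
      _ ≤ _ := this
      _ ≤ _ := Finset.single_le_sum (f := fun a => (pcmp p a H).support.card)
        (fun _ _ => Nat.zero_le _) (Finset.mem_range.2 hap)
      _ ≤ _ := hwt
  · push Not at hc
    have hne : (X ^ η - C (μ ^ p)) ^ J ≠ (0 : F[X]) :=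
      pow_ne_zero _ (X_pow_sub_C_ne_zero (Nat.pos_of_ne_zero hη0) _)
    calc w3 ≤ (c + 1) * w := ha
      _ ≤ ((Finset.range p).filter (fun a => pcmp p a K ≠ 0)).card * w :=
        Nat.mul_le_mul_right _ hc
      _ = ∑ a ∈ (Finset.range p).filter (fun a => pcmp p a K ≠ 0), w := by simp
      _ ≤ ∑ a ∈ (Finset.range p).filter (fun a => pcmp p a K ≠ 0), (pcmp p a H).support.card := by
        apply Finset.sum_le_sum
        intro a ha
        rw [Finset.mem_filter, Finset.mem_range] at ha
        apply h1 (μ ^ p) hμp _ _ (hdeg a)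
        · rw [hcmp a ha.1]; exact Dvd.intro _ rfl
        · rw [hcmp a ha.1]; exact mul_ne_zero hne ha.2
      _ ≤ ∑ a ∈ Finset.range p, (pcmp p a H).support.card :=
        Finset.sum_le_sum_of_subset (Finset.filter_subset _ _)
      _ ≤ _ := hwt

lemma LB_E0 {p η : ℕ} [Fact p.Prime] [CharP F p] (hη : (η : F) ≠ 0) (s : ℕ) :
    LB F p η s (p ^ s - 1) (p ^ s) := by
  have hp : 0 < p := (Fact.out : p.Prime).pos
  have hη0 : 0 < η := Nat.pos_of_ne_zero (by rintro rfl; simp at hη)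
  induction s with
  | zero => simpa using LB_zero p η 0
  | succ s ih =>
    have hps : 0 < p ^ s := pow_pos hp s
    have := LB_step (c := p - 1) (w2 := p ^ (s + 1)) (w3 := p ^ (s + 1)) hη ih
      (by rw [Nat.sub_add_cancel hps]; exact LB_top hη0 _)
      (by rw [Nat.sub_add_cancel hp, pow_succ, mul_comm]) le_rfl
    refine this.mono (le_of_eq ?_) le_rfl
    obtain ⟨t, ht⟩ := Nat.exists_eq_succ_of_ne_zero hps.ne'
    rw [pow_succ, ht, Nat.succ_eq_add_one, Nat.add_sub_cancel, add_mul, mul_comm p t]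
    omega

lemma LB_E1 {p η : ℕ} [Fact p.Prime] [CharP F p] (hη : (η : F) ≠ 0) (l v : ℕ) :
    LB F p η (l + 1) (p ^ (l + 1) - p + v) ((v + 1) * p ^ l) := by
  have hp : 0 < p := (Fact.out : p.Prime).pos
  have hη0 : 0 < η := Nat.pos_of_ne_zero (by rintro rfl; simp at hη)
  have hps : 0 < p ^ l := pow_pos hp l
  have := LB_step (c := v) (w2 := (v + 1) * p ^ l) hη (LB_E0 (p := p) hη l)
      (by rw [Nat.sub_add_cancel hps]; exact LB_top hη0 _) le_rfl le_rfl
  refine this.mono (le_of_eq ?_) le_rfl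
  rw [Nat.mul_sub, pow_succ, mul_comm p, mul_one]

lemma LB_S0 {p η : ℕ} [Fact p.Prime] [CharP F p] (hη : (η : F) ≠ 0) (l v e : ℕ) :
    LB F p η (l + 1 + e) (p ^ e * (p ^ (l + 1) - p + v)) ((v + 1) * p ^ l) := by
  induction e with
  | zero => simpa using LB_E1 hη l v
  | succ e ih =>
    have := LB_step (c := 0) hη ih (ih.mono (Nat.le_succ _) le_rfl)
      (w3 := (v + 1) * p ^ l) (by simp) le_rfl
    refine this.mono (le_of_eq ?_) le_rfl
    ring

lemma LB_S1 {p η : ℕ} [Fact p.Prime] [CharP F p] (hη : (η : F) ≠ 0) (l v e : ℕ) :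
    LB F p η (l + 1 + e) (p ^ e * (p ^ (l + 1) - p + v) + 1) ((v + 2) * p ^ l) := by
  induction e with
  | zero => simpa [add_assoc] using LB_E1 hη l (v + 1)
  | succ e ih =>
    have := LB_step (c := 1) hη (LB_S0 (p := p) hη l v e) ih
      (w3 := (v + 2) * p ^ l) (by rw [← mul_assoc]; exact Nat.mul_le_mul_right _ (by omega)) le_rfl
    refine this.mono (le_of_eq ?_) le_rfl
    ring

lemma LB_main {p η : ℕ} [Fact p.Prime] [CharP F p] (hη : (η : F) ≠ 0) (l e u i : ℕ)
    (hu : u + 1 ≤ p) (hi : i < (u + 1) * p ^ e) (hi2 : i ≤ p ^ (l + 1 + e)) :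
    LB F p η (l + 1 + e) (p ^ (l + 1 + e) - i) ((p - u + 1) * p ^ l) := by
  have hp : 0 < p := (Fact.out : p.Prime).pos
  have := LB_S1 (p := p) hη l (p - u - 1) e
  refine this.mono ?_ ?_
  · have h1 : p ≤ p ^ (l + 1) := Nat.le_self_pow (by omega) p
    have h2 : p ^ (l + 1) - p + (p - u - 1) = p ^ (l + 1) - (u + 1) := by omega
    rw [h2, Nat.mul_sub, ← pow_add, mul_comm (p ^ e) (u + 1), add_comm e]
    have h3 : (u + 1) * p ^ e ≤ p ^ (l + 1 + e) := by
      rw [pow_add]; exact Nat.mul_le_mul_right _ (by omega)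
    omega
  · apply Nat.mul_le_mul_right; omega

noncomputable def toP {n : ℕ} (c : Fin n → F) : F[X] := ∑ j : Fin n, C (c j) * X ^ (j : ℕ)

lemma coeff_toP {n : ℕ} (c : Fin n → F) (k : ℕ) :
    (toP c).coeff k = if h : k < n then c ⟨k, h⟩ else 0 := by
  unfold toP
  rw [finsetSum_coeff]
  simp only [coeff_C_mul, coeff_X_pow, mul_ite, mul_one, mul_zero]
  split_ifs with h
  · rw [Finset.sum_eq_single ⟨k, h⟩]
    · simp
    · intro b _ hb
      rw [if_neg]
      intro hk
      exact hb (Fin.ext hk.symm)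
    · simp
  · apply Finset.sum_eq_zero
    intro b _
    rw [if_neg]
    have := b.2
    omega

lemma coeff_toP_fin {n : ℕ} (c : Fin n → F) (k : Fin n) : (toP c).coeff k = c k := by
  rw [coeff_toP, dif_pos k.2]

lemma toP_of_poly {n : ℕ} (H : F[X]) (hd : ∀ k, n ≤ k → H.coeff k = 0) :
    toP (fun k : Fin n => H.coeff k) = H := by
  ext k
  rw [coeff_toP]
  split_ifs with h
  · rfl
  · exact (hd k (by omega)).symm

lemma coeff_toP_ge {n : ℕ} (c : Fin n → F) (k : ℕ) (h : n ≤ k) : (toP c).coeff k = 0 := by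
  rw [coeff_toP, dif_neg (by omega)]

lemma toP_ne_zero {n : ℕ} {c : Fin n → F} (h : c ≠ 0) : toP c ≠ 0 := by
  intro h0
  apply h
  ext k
  rw [← coeff_toP_fin c k, h0]; simp

lemma wt_poly {n : ℕ} (H : F[X]) :
    hammingNorm (fun k : Fin n => H.coeff k) ≤ H.support.card := by
  unfold hammingNorm
  apply Finset.card_le_card_of_injOn (fun k : Fin n => (k : ℕ))
  · intro k hk
    simpa using hk
  · intro a _ b _ h
    exact Fin.ext h

section
variable {p η s i : ℕ} [Fact p.Prime] [CharP F p] {lam0 : F}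

lemma modulus_eq : (X ^ (η * p ^ s) - C (lam0 ^ p ^ s) : F[X]) = (X ^ η - C lam0) ^ p ^ s := by
  rw [sub_pow_char_pow, ← pow_mul, C_pow]

lemma mem_Ci (hi : i ≤ p ^ s) (c : Fin (η * p ^ s) → F) :
    c ∈ Ci p η s i lam0 ↔ (X ^ η - C lam0) ^ i ∣ toP c := by
  change toP c ∈ Ideal.span _ ↔ _
  rw [modulus_eq, Ideal.mem_span_pair]
  constructor
  · rintro ⟨a, b, h⟩
    rw [← h]
    exact dvd_add (Dvd.intro_left _ rfl) ((pow_dvd_pow _ hi).mul_left _)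
  · rintro ⟨Q, hQ⟩
    exact ⟨Q, 0, by rw [hQ]; ring⟩

lemma pp_monic (hη : 0 < η) (N : ℕ) : ((X ^ η - C lam0 : F[X]) ^ N).Monic :=
  (monic_X_pow_sub_C _ hη.ne').pow N

lemma card_Ci (hη : 0 < η) (hi : i ≤ p ^ s) :
    Nat.card (Ci p η s i lam0) = Fintype.card F ^ (η * (p ^ s - i)) := by
  set P : F[X] := (X ^ η - C lam0) ^ i with hP
  have hPm : P.Monic := pp_monic hη i
  have hPd : P.natDegree = i * η := by rw [hP, natDegree_pow, natDegree_X_pow_sub_C]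
  set m := η * (p ^ s - i) with hm
  have hmn : η * p ^ s = i * η + m := by
    rw [hm, mul_comm i, ← mul_add]; congr 1; omega
  have hdeg : ∀ a : Fin m → F, ∀ k, η * p ^ s ≤ k → (P * toP a).coeff k = 0 := by
    intro a k hk
    by_cases h0 : toP a = 0
    · simp [h0]
    apply coeff_eq_zero_of_natDegree_lt
    have : (toP a).natDegree < m := by
      by_contra hh
      exact h0 (leadingCoeff_eq_zero.1 (coeff_toP_ge a _ (not_lt.1 hh)))
    have := natDegree_mul_le (p := P) (q := toP a)
    omega
  let φ : (Fin m → F) → Ci p η s i lam0 := fun a =>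
    ⟨fun k => (P * toP a).coeff k, by
      rw [mem_Ci hi, toP_of_poly _ (hdeg a)]; exact Dvd.intro _ rfl⟩
  have hφ : Function.Bijective φ := by
    constructor
    · intro a b hab
      have h1 : (fun k : Fin (η * p ^ s) => (P * toP a).coeff k) =
        (fun k : Fin (η * p ^ s) => (P * toP b).coeff k) := congrArg Subtype.val hab
      have h2 : P * toP a = P * toP b := by
        rw [← toP_of_poly _ (hdeg a), ← toP_of_poly _ (hdeg b), h1]
      have h3 := mul_left_cancel₀ hPm.ne_zero h2
      ext k
      rw [← coeff_toP_fin a k, h3, coeff_toP_fin]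
    · rintro ⟨c, hc⟩
      obtain ⟨Q, hQ⟩ := (mem_Ci hi c).1 hc
      have hQd : ∀ k, m ≤ k → Q.coeff k = 0 := by
        intro k hk
        by_contra hne
        have h1 := le_natDegree_of_ne_zero hne
        have hQ0 : Q ≠ 0 := by rintro rfl; simp at hne
        have h2 := hPm.natDegree_mul' hQ0
        rw [← hQ] at h2
        have h3 := coeff_toP_ge c (toP c).natDegree (by omega)
        have h4 : toP c = 0 := leadingCoeff_eq_zero.1 h3
        rw [h4] at hQ
        exact (mul_ne_zero hPm.ne_zero hQ0) hQ.symm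
      refine ⟨fun k => Q.coeff k, ?_⟩
      apply Subtype.ext
      ext k
      change (P * toP _).coeff k = _
      rw [toP_of_poly _ hQd, ← hQ, coeff_toP_fin]
  rw [← Nat.card_congr (Equiv.ofBijective φ hφ)]
  simp

lemma card_supp_pow (η : ℕ) (a : F) (N : ℕ) : ((X ^ η - C a : F[X]) ^ N).support.card ≤ N + 1 := by
  rw [sub_eq_add_neg, add_pow]
  have : ∀ m ∈ Finset.range (N + 1), (X ^ η) ^ m * (-C a) ^ (N - m) * ((N.choose m : ℕ) : F[X]) =
      C ((-a) ^ (N - m) * (N.choose m : F)) * X ^ (η * m) := by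
    intro m _
    simp only [C_mul, C_pow, C_neg, map_natCast, pow_mul]; ring
  rw [Finset.sum_congr rfl this]
  have hsub : (∑ m ∈ Finset.range (N + 1), C ((-a) ^ (N - m) * (N.choose m : F)) * X ^ (η * m) :
      F[X]).support ⊆ (Finset.range (N + 1)).image (fun m => η * m) := by
    intro k hk
    rw [mem_support_iff, finsetSum_coeff] at hk
    obtain ⟨m, hm, hne⟩ := Finset.exists_ne_zero_of_sum_ne_zero hk
    rw [Finset.mem_image]
    refine ⟨m, hm, ?_⟩
    rw [coeff_C_mul, coeff_X_pow] at hne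
    by_contra hh
    rw [if_neg (fun h => hh h.symm)] at hne
    simp at hne
  calc _ ≤ _ := Finset.card_le_card hsub
    _ ≤ _ := Finset.card_image_le
    _ = _ := by simp

lemma d_UB (hη : 0 < η) {d : ℕ} (l e t : ℕ) (hs : s = l + 1 + e) (ht : t < p)
    (hi : i ≤ p ^ e * (p ^ (l + 1) - p + t)) (hd : minDistIs (Ci p η s i lam0) d) :
    d ≤ (t + 1) * p ^ l := by
  have hp : 0 < p := (Fact.out : p.Prime).pos
  set N := p ^ e * (p ^ (l + 1) - p + t) with hN
  have hpl : p ≤ p ^ (l + 1) := Nat.le_self_pow (by omega) p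
  have hNs : N < p ^ s := by
    rw [hN, hs, add_comm (l + 1) e, pow_add p e (l + 1)]
    exact Nat.mul_lt_mul_of_pos_left (by omega) (pow_pos hp e)
  set H : F[X] := (X ^ η - C lam0) ^ N with hH
  have hHd : H.natDegree = N * η := by rw [hH, natDegree_pow, natDegree_X_pow_sub_C]
  have hdeg : ∀ k, η * p ^ s ≤ k → H.coeff k = 0 := by
    intro k hk
    apply coeff_eq_zero_of_natDegree_lt
    rw [hHd, mul_comm]
    exact lt_of_lt_of_le (Nat.mul_lt_mul_of_pos_left hNs hη) hk
  have hHeq : H = (X ^ (η * p ^ e * p) - C ((lam0 ^ p ^ e) ^ p)) ^ (p ^ l - 1) *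
      (X ^ (η * p ^ e) - C (lam0 ^ p ^ e)) ^ t := by
    have e1 : (X ^ (η * p ^ e * p) - C ((lam0 ^ p ^ e) ^ p) : F[X]) =
      (X ^ (η * p ^ e) - C (lam0 ^ p ^ e)) ^ p := by
        rw [sub_pow_char, ← pow_mul X, ← C_pow]
    rw [e1, modulus_eq, hH, hN, ← pow_mul, ← pow_mul, ← pow_mul, ← pow_add]
    congr 1
    have : p ^ (l + 1) - p = p * (p ^ l - 1) := by rw [Nat.mul_sub, pow_succ, mul_comm, mul_one]
    rw [this]; ring
  have hHm : H.Monic := pp_monic hη N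
  have hwt : H.support.card ≤ (t + 1) * p ^ l := by
    rw [hHeq]
    refine card_support_mul_le.trans ?_
    rw [mul_comm (t + 1)]
    refine Nat.mul_le_mul ?_ (card_supp_pow _ _ _)
    have := card_supp_pow (η * p ^ e * p) ((lam0 ^ p ^ e) ^ p) (p ^ l - 1)
    have h1 : 0 < p ^ l := pow_pos hp l
    omega
  refine le_trans (hd.2 ⟨fun k => H.coeff k, ?_, ?_, rfl⟩) ((wt_poly H).trans hwt)
  · rw [mem_Ci (hi.trans hNs.le), toP_of_poly _ hdeg]
    exact pow_dvd_pow _ hi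
  · intro h0
    have := toP_of_poly _ hdeg
    rw [h0] at this
    apply hHm.ne_zero
    rw [← this]; ext k; rw [coeff_toP]; simp

lemma i_lt (hη : 0 < η) (hi : i ≤ p ^ s) {d : ℕ} (hd : minDistIs (Ci p η s i lam0) d) :
    i < p ^ s := by
  rcases hi.lt_or_eq with h | h
  · exact h
  exfalso
  obtain ⟨c, hc, hc0, _⟩ := hd.1
  have h1 := (mem_Ci hi c).1 hc
  have h2 := natDegree_le_of_dvd h1 (toP_ne_zero hc0)
  rw [natDegree_pow, natDegree_X_pow_sub_C, h, mul_comm] at h2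
  exact toP_ne_zero hc0 (leadingCoeff_eq_zero.1 (coeff_toP_ge c _ h2))

lemma exists_dual (hη : 0 < η) (hi : i ≤ p ^ s) {r : ℕ}
    (hr : hasAllSymbolLocality (Ci p η s i lam0) r) :
    ∃ h : Fin (η * p ^ s) → F, h ≠ 0 ∧ hammingNorm h ≤ r + 1 ∧
      ∀ c ∈ Ci p η s i lam0, ∑ k, h k * c k = 0 := by
  have hp : 0 < p := (Fact.out : p.Prime).pos
  have hn : 0 < η * p ^ s := Nat.mul_pos hη (pow_pos hp s)
  obtain ⟨I, hI0, hIr, f, hf⟩ := hr ⟨0, hn⟩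
  set i0 : Fin (η * p ^ s) := ⟨0, hn⟩ with hi0
  let M : Submodule F (Fin (η * p ^ s) → F) :=
    { carrier := Ci p η s i lam0
      add_mem' := by
        intro a b ha hb
        rw [mem_Ci hi] at ha hb ⊢
        have : toP (a + b) = toP a + toP b := by
          ext k; simp only [coeff_toP, coeff_add]; split_ifs <;> simp
        rw [this]; exact dvd_add ha hb
      zero_mem' := by
        rw [mem_Ci hi]
        have : toP (0 : Fin (η * p ^ s) → F) = 0 := by
          ext k; rw [coeff_toP]; simp
        rw [this]; exact dvd_zero _
      smul_mem' := by
        intro x a ha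
        rw [mem_Ci hi] at ha ⊢
        have : toP (x • a) = C x * toP a := by
          ext k; simp only [coeff_toP, coeff_C_mul]; split_ifs <;> simp
        rw [this]; exact ha.mul_left _ }
  have hMmem : ∀ c, c ∈ M ↔ c ∈ Ci p η s i lam0 := fun c => Iff.rfl
  let ev : Fin (η * p ^ s) → (M →ₗ[F] F) := fun k => (LinearMap.proj k).comp M.subtype
  have key : ev i0 ∈ Submodule.span F (Set.range (fun k : I => ev k.1)) := by
    apply mem_span_of_iInf_ker_le_ker
    intro c hc
    rw [Submodule.mem_iInf] at hc
    rw [LinearMap.mem_ker]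
    have h1 := hf c.1 c.2
    have h2 := hf 0 M.zero_mem
    change c.1 i0 = 0
    rw [h1]
    have : (fun j : {x // x ∈ I} => c.1 j.1) = (fun j => (0 : Fin (η * p ^ s) → F) j.1) := by
      ext j
      exact hc j
    rw [this, ← h2]; rfl
  rw [Submodule.mem_span_range_iff_exists_fun] at key
  obtain ⟨g, hg⟩ := key
  refine ⟨fun k => if h : k ∈ I then g ⟨k, h⟩ else if k = i0 then -1 else 0, ?_, ?_, ?_⟩
  · intro h0
    have := congrFun h0 i0
    simp [hI0] at this
  · unfold hammingNorm
    calc _ ≤ (insert i0 I).card := by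
          apply Finset.card_le_card
          intro k hk
          rw [Finset.mem_filter] at hk
          rw [Finset.mem_insert]
          by_contra hh
          push Not at hh
          apply hk.2
          simp [hh.1, hh.2]
      _ ≤ I.card + 1 := Finset.card_insert_le _ _
      _ ≤ _ := by omega
  · intro c hc
    have h1 := LinearMap.congr_fun hg (⟨c, hc⟩ : M)
    rw [LinearMap.sum_apply] at h1
    have h2 : ∑ k : I, g k * c k.1 = c i0 := h1
    have h3 : ∀ k, (if h : k ∈ I then g ⟨k, h⟩ else if k = i0 then -1 else 0) * c k =
        (if h : k ∈ I then g ⟨k, h⟩ * c k else 0) + (if k = i0 then - c k else 0) := by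
      intro k
      by_cases hk : k ∈ I
      · have : k ≠ i0 := by rintro rfl; exact hI0 hk
        simp [hk, this]
      · by_cases hk2 : k = i0 <;> simp [hk2, hI0, hk]
    rw [Finset.sum_congr rfl (fun k _ => h3 k), Finset.sum_add_distrib]
    rw [Finset.sum_ite_eq' Finset.univ i0 (fun k => - c k), if_pos (Finset.mem_univ _), ← h2]
    have h4 : ∑ k, (if h : k ∈ I then g ⟨k, h⟩ * c k else 0) = ∑ k : I, g k * c k.1 := by
      rw [← Finset.sum_subset (Finset.subset_univ I)]
      · rw [← Finset.sum_coe_sort I]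
        apply Finset.sum_congr rfl
        intro k _
        simp
      · intro k _ hk
        simp [hk]
    rw [h4]; ring

lemma dual_dvd_aux {n : ℕ} (hn : 0 < n) (lam : F) (G R : F[X]) (hG0 : G ≠ 0)
    (hMG : (X ^ n - C lam : F[X]) = G * R) (h : Fin n → F)
    (hh : ∀ c : F[X], (∀ k, n ≤ k → c.coeff k = 0) → G ∣ c → ∑ k : Fin n, h k * c.coeff k = 0) :
    R ∣ toP (fun k => h k.rev) := by
  generalize hH : toP (fun k => h k.rev) = H
  generalize hM : (X ^ n - C lam : F[X]) = M at hMG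
  have hMm : M.Monic := by rw [← hM]; exact monic_X_pow_sub_C _ hn.ne'
  have hMd : M.natDegree = n := by rw [← hM]; exact natDegree_X_pow_sub_C
  suffices hdvd : M ∣ H * G by
    rw [hMG, mul_comm H G] at hdvd
    exact (mul_dvd_mul_iff_left hG0).1 hdvd
  by_contra hnd
  set y := (H * G) %ₘ M with hy
  have hy0 : y ≠ 0 := fun h0 => hnd ((modByMonic_eq_zero_iff_dvd hMm).1 h0)
  have hM1 : M ≠ 1 := by
    intro h1; rw [h1] at hMd; simp at hMd; omega
  have hyd : y.natDegree < n := by rw [← hMd]; exact natDegree_modByMonic_lt _ hMm hM1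
  set b := n - 1 - y.natDegree with hb
  set c := (X ^ b * G) %ₘ M with hc
  have hcd : ∀ k, n ≤ k → c.coeff k = 0 := by
    intro k hk
    apply coeff_eq_zero_of_natDegree_lt
    have := natDegree_modByMonic_lt (X ^ b * G) hMm hM1
    rw [← hc] at this
    omega
  have hHd : ∀ k, n ≤ k → H.coeff k = 0 := by rw [← hH]; exact coeff_toP_ge _
  -- the codeword
  have hcmem : G ∣ c := by
    have := modByMonic_add_div (X ^ b * G) M
    rw [hc, eq_sub_of_add_eq this]
    exact dvd_sub (Dvd.intro_left _ rfl) ((Dvd.intro _ hMG.symm).mul_right _)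
  have h0 := hh c hcd hcmem
  -- coefficient of the product
  have h1 : (H * c).coeff (n - 1) = 0 := by
    rw [← h0, coeff_mul, Finset.Nat.sum_antidiagonal_eq_sum_range_succ_mk]
    have : (n - 1).succ = n := by omega
    rw [this, ← Finset.sum_range_reflect, Finset.sum_range]
    apply Finset.sum_congr rfl
    intro k _
    have hk := k.2
    have e1 : H.coeff (n - 1 - k) = h k := by
      rw [← hH, coeff_toP, dif_pos (by omega)]
      congr 1
      ext
      simp only [Fin.val_rev]
      omega
    have e2 : n - 1 - (n - 1 - (k : ℕ)) = k := by omega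
    simp only [e1, e2]
  -- congruence
  obtain ⟨Q, hQ⟩ : M ∣ H * c - X ^ b * y := by
    have a1 := modByMonic_add_div (X ^ b * G) M
    have a2 := modByMonic_add_div (H * G) M
    refine ⟨X ^ b * ((H * G) /ₘ M) - H * ((X ^ b * G) /ₘ M), ?_⟩
    rw [hc, hy]
    linear_combination H * a1 - X ^ b * a2
  have hyb : (X ^ b * y).coeff (n - 1) ≠ 0 := by
    have : n - 1 = y.natDegree + b := by omega
    rw [this, coeff_X_pow_mul]
    exact fun h => hy0 (leadingCoeff_eq_zero.1 h)
  have hQd : Q.coeff (n - 1) = 0 := by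
    by_cases hQ0 : Q = 0
    · simp [hQ0]
    apply coeff_eq_zero_of_natDegree_lt
    have b1 := hMm.natDegree_mul' hQ0
    rw [← hQ] at b1
    have b2 : (H * c - X ^ b * y).natDegree ≤ 2 * n - 2 := by
      refine (natDegree_sub_le _ _).trans (max_le ?_ ?_)
      · refine natDegree_mul_le.trans ?_
        have c1 : H.natDegree ≤ n - 1 := natDegree_le_iff_coeff_eq_zero.2
          (fun k hk => hHd k (by omega))
        have c2 : c.natDegree ≤ n - 1 := natDegree_le_iff_coeff_eq_zero.2
          (fun k hk => hcd k (by omega))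
        omega
      · refine natDegree_mul_le.trans ?_
        rw [natDegree_X_pow]
        omega
    omega
  have h3 := congrArg (fun q => coeff q (n - 1)) hQ
  simp only [coeff_sub, h1] at h3
  rw [← hM, sub_mul, coeff_sub, coeff_X_pow_mul' Q, if_neg (by omega), coeff_C_mul, hQd] at h3
  apply hyb
  simpa using h3

lemma dual_dvd (hη : 0 < η) (hi : i ≤ p ^ s) (h : Fin (η * p ^ s) → F)
    (hh : ∀ c ∈ Ci p η s i lam0, ∑ k, h k * c k = 0) :
    (X ^ η - C lam0) ^ (p ^ s - i) ∣ toP (fun k => h k.rev) := by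
  have hp : 0 < p := (Fact.out : p.Prime).pos
  have hn : 0 < η * p ^ s := Nat.mul_pos hη (pow_pos hp s)
  apply dual_dvd_aux hn (lam0 ^ p ^ s) ((X ^ η - C lam0) ^ i) _ (pp_monic hη i).ne_zero
  · rw [modulus_eq, ← pow_add]; congr 1; omega
  · intro c hcd hGc
    apply hh (fun k => c.coeff k)
    rw [mem_Ci hi, toP_of_poly _ hcd]
    exact hGc

lemma r_LB (hη : 0 < η) (hl : lam0 ≠ 0) (hi : i ≤ p ^ s) {r w : ℕ}
    (hr : minLocalityIs (Ci p η s i lam0) r) (hw : LB F p η s (p ^ s - i) w) : w ≤ r + 1 := by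
  obtain ⟨h, h0, hwt, hd⟩ := exists_dual hη hi hr.1
  have h1 := hw lam0 hl (toP (fun k => h k.rev)) (toP_ne_zero (by
    intro hz; apply h0; ext k
    have := congrFun hz k.rev
    simpa using this)) (coeff_toP_ge _) (dual_dvd hη hi h hd)
  refine h1.trans (le_trans ?_ hwt)
  unfold hammingNorm
  refine Finset.card_le_card_of_surjOn (fun k : Fin (η * p ^ s) => (k.rev : ℕ)) ?_
  intro k hk
  rw [Finset.mem_coe, mem_support_iff, coeff_toP] at hk
  split_ifs at hk with hkn
  · refine ⟨Fin.rev ⟨k, hkn⟩, ?_, by simp⟩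
    simpa using hk
  · exact absurd rfl hk

end

lemma nceil_ub {k r m : ℕ} (hr : 0 < r) (h : k ≤ m * r) : nceil k r ≤ m := by
  unfold nceil
  rw [← Nat.lt_succ_iff, Nat.div_lt_iff_lt_mul hr, Nat.succ_eq_add_one, add_mul]
  omega

lemma nceil_lb {k r m : ℕ} (hr : 0 < r) (h : m ≤ nceil k r) : m * r ≤ k + r - 1 := by
  unfold nceil at h
  exact (Nat.le_div_iff_mul_le hr).1 h

lemma arithA {p s η i d r : ℕ} (hp2 : 2 ≤ p) (hs : 2 ≤ s) (hη : 0 < η) (hi0 : 0 < i)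
    (hiA : i < p ^ (s - 1))
    (heq : d + nceil (η * (p ^ s - i)) r = η * i + 2)
    (UB : ∀ l e t, s = l + 1 + e → t < p → i ≤ p ^ e * (p ^ (l + 1) - p + t) →
      d ≤ (t + 1) * p ^ l)
    (RB : ∀ l e u, s = l + 1 + e → u + 1 ≤ p → i < (u + 1) * p ^ e →
      (p - u + 1) * p ^ l ≤ r + 1) :
    (∃ ℓ : ℕ, ℓ ≤ s - 1 ∧ i = p ^ (s - ℓ - 1)) ∨ (p ≠ 2 ∧ η = 1 ∧ i = 2) := by
  have hd : d ≤ 2 := by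
    have := UB 0 (s - 1) 1 (by omega) (by omega) (by simpa using hiA.le)
    simpa using this
  obtain ⟨e, he⟩ : ∃ e, e = Nat.log p i := ⟨_, rfl⟩
  have h1 : p ^ e ≤ i := by rw [he]; exact Nat.pow_log_le_self p hi0.ne'
  have h2 : i < p ^ (e + 1) := by rw [he]; exact Nat.lt_pow_succ_log_self (by omega) i
  have hes : e < s - 1 := (Nat.pow_lt_pow_iff_right (by omega)).1 (h1.trans_lt hiA)
  obtain ⟨l, hl⟩ : ∃ l, s = l + 1 + e := ⟨s - 1 - e, by omega⟩
  have hAp : 0 < p ^ e := pow_pos (by omega) e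
  have hLp : 0 < p ^ l := pow_pos (by omega) l
  obtain ⟨u, hu⟩ : ∃ u, u = i / p ^ e := ⟨_, rfl⟩
  have hu1 : u * p ^ e ≤ i := by rw [hu]; exact Nat.div_mul_le_self _ _
  have hu2 : i < (u + 1) * p ^ e := by
    rw [hu, mul_comm]; exact Nat.lt_mul_div_succ i hAp
  have hu0 : 1 ≤ u := by rw [hu]; exact (Nat.one_le_div_iff hAp).2 h1
  have hup : u < p := by
    rw [hu]; apply Nat.div_lt_of_lt_mul; rw [← pow_succ]; exact h2
  have hr := RB l e u hl (by omega) hu2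
  have hps : p ^ s = p * p ^ e * p ^ l := by rw [hl]; ring
  obtain ⟨v, hv⟩ : ∃ v, v = p - u + 1 := ⟨_, rfl⟩
  rw [← hv] at hr
  have hv2 : 2 ≤ v := by omega
  have hpuv : p + 1 = u + v := by omega
  have hrpos : 0 < r := by nlinarith
  have hc := nceil_lb hrpos (show η * i ≤ nceil (η * (p ^ s - i)) r by omega)
  have hile : i ≤ p ^ s := hiA.le.trans (Nat.pow_le_pow_right (by omega) (by omega))
  obtain ⟨j, hj⟩ := Nat.exists_eq_add_of_le hile
  rw [hj, Nat.add_sub_cancel_left] at hc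
  have hprod : η * i * (r + 1) + 1 ≤ η * p ^ s + r := by
    rw [hj, mul_add η, mul_add (η * i)]; omega
  have hηi : 1 ≤ η * i := Nat.mul_pos hη hi0
  have hmain : η * i * (v * p ^ l) + 2 ≤ η * p ^ s + v * p ^ l := by
    obtain ⟨y, hy⟩ := Nat.exists_eq_add_of_le hηi
    rw [hy, add_mul, one_mul] at hprod
    rw [hy, add_mul, one_mul]
    have := Nat.mul_le_mul_left y hr
    omega
  rw [hps] at hmain
  rcases hu0.eq_or_lt with hu' | hu'
  · left
    refine ⟨l, by omega, ?_⟩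
    have : s - l - 1 = e := by omega
    rw [this]
    by_contra hne
    have hlt : p ^ e + 1 ≤ i := by omega
    have hvp : v = p := by omega
    rw [hvp] at hmain
    have : η * (p ^ e + 1) * (p * p ^ l) ≤ η * i * (p * p ^ l) := by gcongr
    have : p * p ^ l ≤ η * (p * p ^ l) := Nat.le_mul_of_pos_left _ hη
    have e5 : η * (p ^ e + 1) * (p * p ^ l) = η * (p * p ^ e * p ^ l) + η * (p * p ^ l) := by ring
    omega
  · right
    obtain ⟨a, rfl⟩ : ∃ a, u = a + 2 := ⟨u - 2, by omega⟩
    obtain ⟨b, rfl⟩ : ∃ b, v = b + 2 := ⟨v - 2, by omega⟩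
    have hpab : p = a + b + 3 := by omega
    have h3 : η * ((a + 2) * p ^ e) * ((b + 2) * p ^ l) ≤ η * i * ((b + 2) * p ^ l) := by gcongr
    have h4 : η * p ^ e * (a + 1) * (b + 1) * p ^ l + 2 ≤ (b + 2) * p ^ l := by
      have e5 : η * ((a + 2) * p ^ e) * ((b + 2) * p ^ l) = η * ((a + b + 3) * p ^ e * p ^ l) +
        η * p ^ e * (a + 1) * (b + 1) * p ^ l := by ring
      rw [← hpab] at e5
      omega
    have h5 : η * p ^ e * (a + 1) * (b + 1) < b + 2 := by
      by_contra hh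
      push Not at hh
      have := Nat.mul_le_mul_right (p ^ l) hh
      omega
    have h6 : η * p ^ e * (a + 1) ≤ 1 := by
      by_contra hh
      push Not at hh
      have h8 : 2 * (b + 1) ≤ η * p ^ e * (a + 1) * (b + 1) := Nat.mul_le_mul_right (b + 1) hh
      omega
    have h7 : η * p ^ e = 1 := by
      have h8 : 1 ≤ η * p ^ e := Nat.mul_pos hη hAp
      have h9 : η * p ^ e ≤ η * p ^ e * (a + 1) := Nat.le_mul_of_pos_right _ (by omega)
      omega
    have ha : a = 0 := by
      rw [h7] at h6
      omega
    have hη1 : η = 1 := (mul_eq_one.1 h7).1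
    have hA1 : p ^ e = 1 := (mul_eq_one.1 h7).2
    rw [hA1] at hu1 hu2
    exact ⟨by omega, hη1, by omega⟩

lemma arithB2 {s η i d r : ℕ} (hs : 2 ≤ s) (hη : 0 < η)
    (hiB : 2 ^ (s - 1) < i) (hilt : i < 2 ^ s) (hr : 0 < r)
    (heq : d + nceil (η * (2 ^ s - i)) r = η * i + 2)
    (UB : ∀ l e t, s = l + 1 + e → t < 2 → i ≤ 2 ^ e * (2 ^ (l + 1) - 2 + t) →
      d ≤ (t + 1) * 2 ^ l) :
    (η = 1 ∧ i = 2 ^ (s - 1) + 1) ∨ (η = 1 ∧ i = 2 ^ s - 1) := by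
  have hn : nceil (η * (2 ^ s - i)) r ≤ η * (2 ^ s - i) :=
    nceil_ub hr (Nat.le_mul_of_pos_right _ hr)
  obtain ⟨j, hj⟩ : ∃ j, j = 2 ^ s - i := ⟨_, rfl⟩
  rw [← hj] at hn heq
  have hs2 : 2 ^ s = 2 * 2 ^ (s - 1) := by rw [← pow_succ']; congr 1; omega
  have hj0 : j ≠ 0 := by omega
  have hjlt : j < 2 ^ (s - 1) := by omega
  obtain ⟨e, he⟩ : ∃ e, e = Nat.log 2 j := ⟨_, rfl⟩
  have h1 : 2 ^ e ≤ j := by rw [he]; exact Nat.pow_log_le_self 2 hj0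
  have h2 : j < 2 ^ (e + 1) := by rw [he]; exact Nat.lt_pow_succ_log_self (by omega) j
  have hes : e < s - 1 := (Nat.pow_lt_pow_iff_right (by omega)).1 (h1.trans_lt hjlt)
  obtain ⟨l, hl⟩ : ∃ l, s = l + 2 + e := ⟨s - 2 - e, by omega⟩
  have hXY : 2 ^ s = 4 * 2 ^ l * 2 ^ e := by rw [hl]; ring
  have hY : 0 < 2 ^ e := pow_pos (by omega) e
  have hL : 0 < 2 ^ l := pow_pos (by omega) l
  have hd : d ≤ 4 * 2 ^ l := by
    have := UB (l + 1) e 1 (by omega) (by omega) (by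
      have e1 : 2 ^ (l + 1 + 1) = 4 * 2 ^ l := by ring
      rw [e1]
      have e2 : 4 * 2 ^ l - 2 + 1 = 4 * 2 ^ l - 1 := by omega
      rw [e2, Nat.mul_sub, mul_one, mul_comm (2 ^ e), ← hXY]
      omega)
    have e3 : 2 ^ (l + 1) = 2 * 2 ^ l := by ring
    omega
  rw [pow_succ] at h2
  -- positive even number
  obtain ⟨w, hw⟩ : ∃ w, 2 ^ (s - 1) = j + (w + 1) := ⟨2 ^ (s - 1) - j - 1, by omega⟩
  have hi : i = j + 2 * (w + 1) := by omega
  have hk : η * (2 * (w + 1)) + 2 ≤ 4 * 2 ^ l := by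
    rw [hi, mul_add η] at heq
    omega
  have hw2 : 2 * 2 ^ l * 2 ^ e = j + (w + 1) := by
    have : 2 * (2 * 2 ^ l * 2 ^ e) = 2 * 2 ^ (s - 1) := by rw [← hs2, hXY]; ring
    omega
  have hηw : 2 * (w + 1) ≤ η * (2 * (w + 1)) := Nat.le_mul_of_pos_left _ hη
  rcases Nat.eq_zero_or_pos e with rfl | hepos
  · right
    have hj1 : j = 1 := by simp at h1 h2; omega
    have h4 : 2 * (w + 1) + 2 = 4 * 2 ^ l := by
      simp at hw2; omega
    have : η = 1 := by nlinarith
    exact ⟨this, by omega⟩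
  · rcases Nat.eq_zero_or_pos l with rfl | hlpos
    · left
      simp at hk hw2
      have hw0 : w = 0 := by omega
      subst hw0
      exact ⟨by omega, by omega⟩
    · exfalso
      obtain ⟨y, hy⟩ : ∃ y, 2 ^ e = y + 2 := ⟨2 ^ e - 2, by
        have := Nat.pow_le_pow_right (show 0 < 2 by omega) hepos
        omega⟩
      obtain ⟨x, hx⟩ : ∃ x, 2 ^ l = x + 2 := ⟨2 ^ l - 2, by
        have := Nat.pow_le_pow_right (show 0 < 2 by omega) hlpos
        omega⟩
      rw [hx, hy] at hw2
      rw [hx] at hk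
      rw [hy] at h2
      have e5 : 2 * (x + 2) * (y + 2) = 2 * (x * y) + 4 * x + 4 * y + 8 := by ring
      omega

lemma arithB3 {p s η i d r : ℕ} (hp3 : 3 ≤ p) (hs : 2 ≤ s) (hη : 0 < η)
    (hiB : p ^ (s - 1) < i) (hilt : i < p ^ s)
    (heq : d + nceil (η * (p ^ s - i)) r = η * i + 2)
    (UB : ∀ l e t, s = l + 1 + e → t < p → i ≤ p ^ e * (p ^ (l + 1) - p + t) →
      d ≤ (t + 1) * p ^ l)
    (RB : ∀ l e u, s = l + 1 + e → u + 1 ≤ p → i < (u + 1) * p ^ e →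
      (p - u + 1) * p ^ l ≤ r + 1) :
    (η = 1 ∧ i = p ^ (s - 1) + 1) ∨ (η = 1 ∧ i = p ^ s - 1) := by
  have hsB : p ^ s = p * p ^ (s - 1) := by rw [← pow_succ']; congr 1; omega
  have hBp : p ≤ p ^ (s - 1) := Nat.le_self_pow (by omega) p
  have UB0 := fun t => UB 0 (s - 1) t (by omega)
  have UB1 := UB (s - 2) 1 (p - 1) (by omega) (by omega)
  have UB2 := fun t => UB (s - 1) 0 t (by omega)
  have RB0 := fun u => RB 0 (s - 1) u (by omega)
  have e1 : p ^ (s - 2 + 1) = p ^ (s - 1) := by congr 1; omega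
  have e2 : p * p ^ (s - 2) = p ^ (s - 1) := by rw [← pow_succ', e1]
  have e3 : p ^ (s - 1 + 1) = p ^ s := by congr 1; omega
  rw [e1, Nat.sub_add_cancel (by omega : 1 ≤ p), e2, pow_one] at UB1
  simp only [e3, pow_zero, one_mul] at UB2
  simp only [zero_add, pow_one, Nat.sub_self, pow_zero, mul_one] at UB0
  simp only [pow_zero, mul_one] at RB0
  clear UB RB e1 e2 e3
  rw [hsB] at hilt heq UB2 ⊢
  clear hsB
  generalize p ^ (s - 1) = B at *
  have hB0 : 0 < B := by omega
  obtain ⟨u, hu⟩ : ∃ u, u = i / B := ⟨_, rfl⟩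
  have hu1 : u * B ≤ i := by rw [hu]; exact Nat.div_mul_le_self _ _
  have hu2 : i < (u + 1) * B := by rw [hu, mul_comm]; exact Nat.lt_mul_div_succ i hB0
  have hup : u < p := by
    rw [hu]; apply Nat.div_lt_of_lt_mul; rw [mul_comm]; exact hilt
  have hr := RB0 u (by omega) hu2
  have hrpos : 0 < r := by omega
  have hn : nceil (η * (p * B - i)) r ≤ η * B := by
    apply nceil_ub hrpos
    rw [mul_assoc]
    apply Nat.mul_le_mul_left
    have h1 : B * (p - u) ≤ B * r := Nat.mul_le_mul_left _ (by omega)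
    have h2 : B * (p - u) = p * B - u * B := by rw [Nat.mul_sub, mul_comm, mul_comm B u]
    omega
  obtain ⟨x, hx⟩ : ∃ x, i = B + (x + 1) := ⟨i - B - 1, by omega⟩
  have hd : η * (x + 1) + 2 ≤ d := by
    rw [hx, mul_add η B] at heq
    rw [hx] at hn
    omega
  have hηx : x + 1 ≤ η * (x + 1) := Nat.le_mul_of_pos_left _ hη
  by_cases c1 : i ≤ 2 * B
  · left
    have := UB0 2 (by omega) (by rw [mul_comm]; exact c1)
    have hx0 : x = 0 := by omega
    subst hx0
    exact ⟨by omega, by omega⟩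
  have h3B : 3 * B ≤ p * B := Nat.mul_le_mul_right _ hp3
  by_cases c2 : i ≤ p * B - B
  · exfalso
    have := UB0 (p - 1) (by omega) (by rw [Nat.mul_sub, mul_one, mul_comm]; exact c2)
    omega
  by_cases c3 : i ≤ p * B - p
  · exfalso
    have := UB1 (by
      have : B - p + (p - 1) = B - 1 := by omega
      rw [this, Nat.mul_sub, mul_one]; exact c3)
    omega
  right
  obtain ⟨T, hT⟩ : ∃ T, i + 1 + T = p * B := ⟨p * B - 1 - i, by omega⟩
  have hTp : T + 2 ≤ p := by omega
  obtain ⟨q, rfl⟩ : ∃ q, p = T + 2 + q := Nat.exists_eq_add_of_le hTp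
  have hd2 := UB2 (q + 1) (by omega) (by omega)
  have hη1 : η = 1 := by
    by_contra hne
    have h2 : 2 ≤ η := by omega
    have h3 : 2 * (x + 1) ≤ η * (x + 1) := Nat.mul_le_mul_right _ h2
    have h4 : 3 * T ≤ B * T := Nat.mul_le_mul_right _ (by omega)
    have h5 : 1 * B ≤ (T + q) * B := Nat.mul_le_mul_right _ (by omega)
    nlinarith
  subst hη1
  refine ⟨rfl, ?_⟩
  rcases Nat.lt_or_ge T 1 with h | h
  · omega
  exfalso
  rcases Nat.lt_or_ge T 2 with h' | h'
  · have hT1 : T = 1 := by omega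
    subst hT1
    have hk : 1 * ((1 + 2 + q) * B - i) = 2 := by omega
    rw [hk] at heq
    have : nceil 2 r ≤ 2 := nceil_ub hrpos (by omega)
    nlinarith
  · obtain ⟨z, rfl⟩ : ∃ z, T = z + 2 := ⟨T - 2, by omega⟩
    have : 3 * (z + 1) ≤ B * (z + 1) := Nat.mul_le_mul_right _ (by omega)
    nlinarith

/-- Suppose `x^η − λ₀` is irreducible over `F_{p^m}` and `s ≥ 2`. If
`C_i(η, p^s, λ₀)` is an optimal LRC for some `0 ≤ i ≤ p^s`, then one of the listed cases
(a)–(e) holds. -/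
theorem stmt16 {p m : ℕ} (hp : p.Prime) (hm : 1 ≤ m)
    {F : Type} [Field F] [Fintype F] [DecidableEq F] (hcard : Fintype.card F = p ^ m)
    (s : ℕ) (hs : 2 ≤ s) (η : ℕ) (hη : 0 < η) (hcop : Nat.Coprime η p)
    (lam0 : F) (hlam0 : lam0 ≠ 0) (hirr : Irreducible (X ^ η - Polynomial.C lam0))
    (i : ℕ) (hi : i ≤ p ^ s) (hopt : optimalLRC (Ci p η s i lam0)) :
    (p = 2 ∧ η = 1 ∧ i = 2 ^ (s - 1) + 1) ∨
    (p ≠ 2 ∧ η = 1 ∧ i = p ^ (s - 1) + 1) ∨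
    (∃ ℓ : ℕ, ℓ ≤ s - 1 ∧ i = p ^ (s - ℓ - 1)) ∨
    (p ≠ 2 ∧ η = 1 ∧ i = 2) ∨
    (η = 1 ∧ i = p ^ s - 1) := by
  have : Fact p.Prime := ⟨hp⟩
  have : CharP F p := charP_of_card_eq_prime_pow hcard
  have hp2 := hp.two_le
  obtain ⟨k, d, r, hk, hd, hr, heq⟩ := hopt
  have hηF : (η : F) ≠ 0 := by
    intro h0
    rw [CharP.cast_eq_zero_iff F p] at h0
    have := Nat.dvd_gcd h0 (dvd_refl p)
    rw [hcop] at this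
    exact hp.one_lt.ne' (Nat.dvd_one.1 this)
  have hilt := i_lt hη hi hd
  rw [card_Ci hη hi] at hk
  have hkeq : η * (p ^ s - i) = k := Nat.pow_right_injective Fintype.one_lt_card hk
  subst hkeq
  have hi0 : 0 < i := by
    rcases Nat.eq_zero_or_pos i with rfl | h
    · have := r_LB (w := r + 2) hη hlam0 hi hr (LB_top hη _)
      omega
    · exact h
  have heq' : d + nceil (η * (p ^ s - i)) r = η * i + 2 := by
    have h1 : η * p ^ s = η * (p ^ s - i) + η * i := by rw [← mul_add]; congr 1; omega
    rw [h1] at heq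
    push_cast at heq
    zify
    linarith
  have UB : ∀ l e t, s = l + 1 + e → t < p → i ≤ p ^ e * (p ^ (l + 1) - p + t) →
      d ≤ (t + 1) * p ^ l := fun l e t h1 h2 h3 => d_UB hη l e t h1 h2 h3 hd
  have RB : ∀ l e u, s = l + 1 + e → u + 1 ≤ p → i < (u + 1) * p ^ e →
      (p - u + 1) * p ^ l ≤ r + 1 := by
    intro l e u h1 h2 h3
    subst h1
    exact r_LB hη hlam0 hi hr (LB_main hηF l e u i h2 h3 hi)
  rcases lt_trichotomy i (p ^ (s - 1)) with h | h | h
  · rcases arithA hp2 hs hη hi0 h heq' UB RB with h | h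
    · exact Or.inr (Or.inr (Or.inl h))
    · exact Or.inr (Or.inr (Or.inr (Or.inl h)))
  · exact Or.inr (Or.inr (Or.inl ⟨0, Nat.zero_le _, by simpa using h⟩))
  · rcases hp2.eq_or_lt with h2 | h2
    · subst h2
      have hrpos : 0 < r := by
        have hs2 : 2 ^ s = 2 * 2 ^ (s - 1) := by rw [← pow_succ']; congr 1; omega
        have := RB 0 (s - 1) 1 (by omega) (by omega) (by rw [hs2] at hilt; exact hilt)
        simp at this
        omega
      rcases arithB2 hs hη h hilt hrpos heq' UB with h | h
      · exact Or.inl ⟨rfl, h⟩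
      · exact Or.inr (Or.inr (Or.inr (Or.inr h)))
    · rcases arithB3 h2 hs hη h hilt heq' UB RB with h | h
      · exact Or.inr (Or.inl ⟨by omega, h⟩)
      · exact Or.inr (Or.inr (Or.inr (Or.inr h)))
end

section
/- Let p be a prime, m ≥ 1, s ≥ 2, η a positive integer coprime to p, λ_0 a nonzero element of F_{p^m} such that x^η − λ_0 is irreducible over F_{p^m}, and let 1 ≤ i ≤ p^{s−1} − 1. If the code C_i(η, p^s, λ_0) is an optimal LRC, then either i = p^{s−k−1} for some 1 ≤ k ≤ s − 1, or else i = 2, η = 1 and p is odd. -/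
open Polynomial

variable {F : Type} [Field F] [Fintype F] [DecidableEq F]

section helpers
variable {K : Type} [Field K]

theorem aux_Vdig_rec {p : ℕ} (hp : 2 ≤ p) (t : ℕ) : Vdig p t = (t % p + 1) * Vdig p (t / p) := by
  rcases Nat.eq_zero_or_pos t with h | h
  · subst h; simp [Vdig]
  · unfold Vdig
    rw [Nat.digits_def' (by omega) h]
    simp

theorem aux_base {p : ℕ} [Fact p.Prime] [CharP K p] (μ : K) (hμ : μ ≠ 0) :
    ∀ (N : ℕ) (G : K[X]) (t : ℕ), G.natDegree ≤ N → G ≠ 0 → G.natDegree < p →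
      (X - C μ) ^ t ∣ G → t + 1 ≤ G.support.card := by
  intro N
  induction N with
  | zero =>
    intro G t hN h0 hp hd
    have h1 : t ≤ G.natDegree := by
      have := natDegree_le_of_dvd hd h0
      simpa using this
    have : 0 < G.support.card := Finset.card_pos.mpr (by simpa using h0)
    omega
  | succ N ih =>
    intro G t hN h0 hp hd
    by_cases hc : G.coeff 0 = 0
    · obtain ⟨G1, rfl⟩ := X_dvd_iff.mpr hc
      have hG1 : G1 ≠ 0 := right_ne_zero_of_mul h0
      have hdeg : (X * G1).natDegree = G1.natDegree + 1 := natDegree_X_mul hG1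
      have hcop : IsCoprime ((X - C μ) ^ t) (X : K[X]) := by
        apply IsCoprime.pow_left
        have := isCoprime_X_sub_C_of_isUnit_sub (R := K) (a := μ) (b := 0) (by simpa using hμ)
        simpa using this
      have hd1 := hcop.dvd_of_dvd_mul_left hd
      have := ih G1 t (by omega) hG1 (by omega) hd1
      refine this.trans ?_
      rw [← Finset.card_map (⟨fun n => n + 1, fun a b h => by simpa using h⟩ : ℕ ↪ ℕ)]
      apply Finset.card_le_card
      intro x hx
      simp only [Finset.mem_map, mem_support_iff] at hx
      obtain ⟨y, hy, rfl⟩ := hx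
      rw [mem_support_iff]
      change (X * G1).coeff (y + 1) ≠ 0
      rwa [coeff_X_mul]
    · rcases Nat.eq_zero_or_pos G.natDegree with hz | hpos
      · exact ih G t (by omega) h0 hp hd
      · have hD : (derivative G).coeff (G.natDegree - 1) ≠ 0 := by
          rw [coeff_derivative, Nat.sub_add_cancel hpos]
          apply mul_ne_zero (by simpa using h0)
          have : ((G.natDegree : ℕ) : K) ≠ 0 := by
            intro h
            rw [CharP.cast_eq_zero_iff K p] at h
            exact absurd (Nat.le_of_dvd hpos h) (by omega)
          rw [← Nat.cast_succ, Nat.succ_eq_add_one, Nat.sub_add_cancel hpos]; exact this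
        have hD0 : derivative G ≠ 0 := by rintro h; simp [h] at hD
        have hdl := natDegree_derivative_lt (p := G) (by omega)
        have := ih (derivative G) (t - 1) (by omega) hD0 (by omega)
          (pow_sub_one_dvd_derivative_of_pow_dvd hd)
        have hs : (derivative G).support.card + 1 ≤ G.support.card := by
          rw [← Finset.card_map (⟨fun n => n + 1, fun a b h => by simpa using h⟩ : ℕ ↪ ℕ)]
          rw [← Finset.card_insert_of_notMem (a := 0) (by simp)]
          apply Finset.card_le_card
          intro x hx
          simp only [Finset.mem_insert, Finset.mem_map, mem_support_iff] at hx
          rcases hx with rfl | ⟨y, hy, rfl⟩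
          · simpa using hc
          · rw [coeff_derivative] at hy
            rw [mem_support_iff]
            exact left_ne_zero_of_mul hy
        omega

noncomputable def auxPart (p j : ℕ) (h : K[X]) : K[X] :=
  ∑ k ∈ Finset.range (h.natDegree + 1), monomial k (h.coeff (p * k + j))

theorem aux_part_coeff {p : ℕ} (hp : 2 ≤ p) (j : ℕ) (h : K[X]) (k : ℕ) :
    (auxPart p j h).coeff k = h.coeff (p * k + j) := by
  unfold auxPart
  simp only [finsetSum_coeff, coeff_monomial]
  rw [Finset.sum_ite_eq']
  split_ifs with hk
  · rfl
  · symm; apply coeff_eq_zero_of_natDegree_lt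
    simp only [Finset.mem_range] at hk
    nlinarith

theorem aux_part_sum {p : ℕ} (hp : 2 ≤ p) (h : K[X]) :
    h = ∑ j ∈ Finset.range p, X ^ j * expand K p (auxPart p j h) := by
  ext m
  rw [finsetSum_coeff, Finset.sum_eq_single (m % p)]
  · rw [coeff_X_pow_mul', if_pos (Nat.mod_le _ _), coeff_expand (by omega), if_pos (Nat.dvd_sub_mod m),
      aux_part_coeff hp, Nat.mul_div_cancel' (Nat.dvd_sub_mod m), Nat.sub_add_cancel (Nat.mod_le _ _)]
  · intro j hj hne
    rw [coeff_X_pow_mul', coeff_expand (by omega)]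
    split_ifs with h1 h2
    · exfalso; apply hne
      have : j ≡ m [MOD p] := (Nat.modEq_iff_dvd' h1).mpr h2
      rw [← this, Nat.mod_eq_of_lt (by simpa using hj)]
    · rfl
    · rfl
  · intro hh; exact absurd (Finset.mem_range.mpr (Nat.mod_lt _ (by omega))) hh

theorem aux_part_natDegree {p : ℕ} (hp : 2 ≤ p) (j : ℕ) (h : K[X]) (h0 : 0 < h.natDegree) :
    (auxPart p j h).natDegree < h.natDegree := by
  rw [Nat.lt_iff_le_pred h0]
  rw [natDegree_le_iff_coeff_eq_zero]
  intro N hN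
  rw [aux_part_coeff hp]
  apply coeff_eq_zero_of_natDegree_lt
  have : h.natDegree ≤ N := by omega
  nlinarith

theorem aux_part_support {p : ℕ} (hp : 2 ≤ p) (h : K[X]) :
    ∑ j ∈ Finset.range p, (auxPart p j h).support.card ≤ h.support.card := by
  rw [Finset.card_eq_sum_card_fiberwise (f := fun m => m % p) (t := Finset.range p) (s := h.support)
    (fun m _ => by simpa using Nat.mod_lt m (by omega))]
  apply Finset.sum_le_sum
  intro j hj
  simp only [Finset.mem_range] at hj
  apply Finset.card_le_card_of_injOn (fun k => p * k + j)
  · intro k hk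
    simp [aux_part_coeff hp] at hk ⊢
    exact ⟨hk, Nat.mod_eq_of_lt hj⟩
  · intro a _ b _ hab
    simp at hab
    omega

theorem aux_massey {p : ℕ} [Fact p.Prime] [CharP K p] :
    ∀ (N : ℕ) (h : K[X]) (μ : K), μ ≠ 0 → h.natDegree ≤ N → h ≠ 0 →
      Vdig p (h.rootMultiplicity μ) ≤ h.support.card := by
  have hpp : p.Prime := Fact.out
  have hp2 := hpp.two_le
  intro N
  induction N using Nat.strong_induction_on with
  | _ N ih =>
  intro h μ hμ hN h0
  rcases Nat.eq_zero_or_pos h.natDegree with hz | hpos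
  · have h1 : h.rootMultiplicity μ = 0 := by
      have := natDegree_le_of_dvd (pow_rootMultiplicity_dvd h μ) h0
      simp at this
      omega
    rw [h1]
    have : 0 < h.support.card := Finset.card_pos.mpr (by simpa using h0)
    simpa [Vdig] using this
  · classical
    set S := (Finset.range p).filter (fun j => auxPart p j h ≠ 0) with hS
    have hSne : S.Nonempty := by
      by_contra hne
      rw [Finset.not_nonempty_iff_eq_empty, Finset.filter_eq_empty_iff] at hne
      apply h0
      rw [aux_part_sum hp2 h]
      apply Finset.sum_eq_zero
      intro j hj
      have := hne hj
      simp only [not_not] at this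
      simp [this]
    obtain ⟨j0, hj0, hmin⟩ := Finset.exists_min_image S (fun j => (auxPart p j h).rootMultiplicity (μ ^ p)) hSne
    set M := (auxPart p j0 h).rootMultiplicity (μ ^ p) with hM
    have hdv : ∀ j, ∃ g : K[X], j < p → auxPart p j h = (X - C (μ ^ p)) ^ M * g := by
      intro j
      by_cases hj : j < p
      · by_cases hz : auxPart p j h = 0
        · exact ⟨0, fun _ => by simp [hz]⟩
        · have := hmin j (by simp [hS, hj, hz])
          obtain ⟨g, hg⟩ := (le_rootMultiplicity_iff hz).mp this
          exact ⟨g, fun _ => hg⟩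
      · exact ⟨0, fun h => absurd h hj⟩
    choose g hg using hdv
    have hmult : ∀ j, j < p → (g j).eval (μ ^ p) ≠ 0 → (auxPart p j h).rootMultiplicity (μ ^ p) = M := by
      intro j hj hne
      have hgj : g j ≠ 0 := by rintro h; simp [h] at hne
      rw [hg j hj, rootMultiplicity_mul (mul_ne_zero (pow_ne_zero _ (X_sub_C_ne_zero _)) hgj),
        rootMultiplicity_X_sub_C_pow, rootMultiplicity_eq_zero hne, add_zero]
    have hj0p : j0 < p := by
      have := (Finset.mem_filter.mp hj0).1; simpa using this
    have hj0n : auxPart p j0 h ≠ 0 := (Finset.mem_filter.mp hj0).2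
    have hg0 : (g j0).eval (μ ^ p) ≠ 0 := by
      intro hev
      obtain ⟨q, hq⟩ := dvd_iff_isRoot.mpr hev
      have : M + 1 ≤ M := by
        conv_rhs => rw [hM]
        rw [le_rootMultiplicity_iff hj0n]
        refine ⟨q, ?_⟩
        rw [hg j0 hj0p, hq]; ring
      omega
    set G : K[X] := ∑ j ∈ Finset.range p, monomial j ((g j).eval (μ ^ p)) with hG
    have hGc : ∀ j, G.coeff j = if j < p then (g j).eval (μ ^ p) else 0 := by
      intro j
      simp [hG, finsetSum_coeff, coeff_monomial]
    have hG0 : G ≠ 0 := by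
      intro hh
      have := hGc j0
      rw [if_pos hj0p, hh, coeff_zero] at this
      exact hg0 this.symm
    have hGd : G.natDegree < p := by
      rw [natDegree_lt_iff_degree_lt hG0, degree_lt_iff_coeff_zero]
      intro m hm
      rw [hGc, if_neg (by omega)]
    have hfrob : ∀ n : ℕ, (X ^ p - C (μ ^ p) : K[X]) = (X - C μ) ^ p := by
      intro _
      rw [sub_pow_char, C_pow]
    set t0 := G.rootMultiplicity μ with ht0
    have ht0p : t0 < p := by
      have := natDegree_le_of_dvd (pow_rootMultiplicity_dvd G μ) hG0
      simp at this
      omega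
    set Kk : K[X] := ∑ j ∈ Finset.range p, X ^ j * expand K p (g j) with hKk
    have hhK : h = (X - C μ) ^ (p * M) * Kk := by
      conv_lhs => rw [aux_part_sum hp2 h]
      rw [hKk, Finset.mul_sum]
      apply Finset.sum_congr rfl
      intro j hj
      rw [hg j (by simpa using hj)]
      simp only [map_mul, map_pow, map_sub, expand_X, expand_C]
      rw [pow_mul, ← hfrob 0, C_pow]
      ring
    have hKG : (X - C μ) ^ p ∣ Kk - G := by
      rw [hKk, hG, ← Finset.sum_sub_distrib]
      apply Finset.dvd_sum
      intro j hj
      rw [← C_mul_X_pow_eq_monomial, mul_comm (C _), ← mul_sub]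
      apply Dvd.dvd.mul_left
      have : (X - C (μ ^ p)) ∣ g j - C ((g j).eval (μ ^ p)) := by
        rw [dvd_iff_isRoot]; simp
      obtain ⟨q, hq⟩ := this
      have h2 := congrArg (expand K p) hq
      rw [map_sub, expand_C, map_mul, map_sub, expand_X, expand_C, hfrob 0] at h2
      exact ⟨_, h2⟩
    have hK0 : Kk ≠ 0 := by rintro hh; apply h0; rw [hhK, hh, mul_zero]
    have hKr : Kk.rootMultiplicity μ = t0 := by
      apply le_antisymm
      · rw [ht0, le_rootMultiplicity_iff hG0]
        have hle : Kk.rootMultiplicity μ < p := by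
          by_contra hge
          push Not at hge
          have h1 := (le_rootMultiplicity_iff hK0).mp hge
          have h2 : (X - C μ) ^ p ∣ G := by
            have := dvd_sub h1 hKG; simpa using this
          have := natDegree_le_of_dvd h2 hG0
          simp at this
          omega
        have := dvd_sub (pow_rootMultiplicity_dvd Kk μ) ((pow_dvd_pow (X - C μ) hle.le).trans hKG)
        simpa using this
      · rw [le_rootMultiplicity_iff hK0]
        have := dvd_add (pow_rootMultiplicity_dvd G μ) ((pow_dvd_pow (X - C μ) ht0p.le).trans hKG)
        simpa using this
    have hhr : h.rootMultiplicity μ = p * M + t0 := by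
      conv_lhs => rw [hhK]
      rw [rootMultiplicity_mul (by rw [← hhK]; exact h0), rootMultiplicity_X_sub_C_pow, hKr]
    rw [hhr, aux_Vdig_rec hp2]
    have e1 : (p * M + t0) % p = t0 := by
      rw [Nat.mul_add_mod]; exact Nat.mod_eq_of_lt ht0p
    have e2 : (p * M + t0) / p = M := by
      rw [Nat.mul_add_div (by omega), Nat.div_eq_of_lt ht0p, add_zero]
    rw [e1, e2]
    have hb := aux_base (p := p) μ hμ G.natDegree G t0 le_rfl hG0 hGd (pow_rootMultiplicity_dvd G μ)
    calc (t0 + 1) * Vdig p M ≤ G.support.card * Vdig p M := Nat.mul_le_mul_right _ hb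
      _ = ∑ j ∈ G.support, Vdig p M := by simp
      _ ≤ ∑ j ∈ G.support, (auxPart p j h).support.card := by
          apply Finset.sum_le_sum
          intro j hj
          rw [mem_support_iff, hGc] at hj
          have hjp : j < p := by
            by_contra hh; simp [hh] at hj
          rw [if_pos hjp] at hj
          rw [← hmult j hjp hj]
          refine ih _ (lt_of_lt_of_le (aux_part_natDegree hp2 j h hpos) hN) _ _ (pow_ne_zero _ hμ) le_rfl ?_
          rw [hg j hjp]
          refine mul_ne_zero (pow_ne_zero _ (X_sub_C_ne_zero _)) ?_
          rintro hh; simp [hh] at hj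
      _ ≤ ∑ j ∈ Finset.range p, (auxPart p j h).support.card := by
          apply Finset.sum_le_sum_of_subset
          intro j hj
          rw [mem_support_iff, hGc] at hj
          by_contra hh
          simp at hh
          simp [Nat.not_lt.mpr hh] at hj
      _ ≤ _ := aux_part_support hp2 h

theorem aux_V0 {p : ℕ} (hp : 2 ≤ p) : ∀ (s t b : ℕ), 1 ≤ b → b ≤ p → t < p ^ (s + 1) →
    p ^ (s + 1) ≤ t + b → (p - b + 1) * p ^ s ≤ Vdig p t := by
  intro s
  induction s with
  | zero =>
    intro t b hb1 hb2 ht h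
    simp at ht h
    rw [aux_Vdig_rec hp, Nat.mod_eq_of_lt ht, Nat.div_eq_of_lt ht]
    simp [Vdig]
    omega
  | succ s ih =>
    intro t b hb1 hb2 ht h
    have hm := Nat.div_add_mod t p
    have hml := Nat.mod_lt t (show 0 < p by omega)
    rw [aux_Vdig_rec hp]
    set t' := t / p
    set t0 := t % p
    have hps : p ^ (s + 1 + 1) = p * p ^ (s + 1) := by ring
    rw [hps] at ht h
    have h1 : t' < p ^ (s + 1) := by
      by_contra hh; push Not at hh
      have := Nat.mul_le_mul_left p hh
      omega
    have h2 : p ^ (s + 1) ≤ t' + 1 := by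
      by_contra hh; push Not at hh
      have := Nat.mul_le_mul_left p (show t' + 2 ≤ p ^ (s + 1) by omega)
      rw [mul_add] at this
      omega
    have h3 := ih t' 1 le_rfl (by omega) h1 h2
    rw [Nat.sub_add_cancel (by omega : 1 ≤ p)] at h3
    have h4 : p - b + 1 ≤ t0 + 1 := by
      have : t' + 1 = p ^ (s + 1) := by omega
      rw [← this, mul_add] at h
      omega
    rw [pow_succ' p s]
    exact Nat.mul_le_mul h4 h3

theorem aux_VA {p : ℕ} (hp : 2 ≤ p) : ∀ (e w t b : ℕ), 1 ≤ b → b ≤ p → t < p ^ (w + 1 + e) →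
    p ^ (w + 1 + e) ≤ t + b * p ^ e → (p - b + 1) * p ^ w ≤ Vdig p t := by
  intro e
  induction e with
  | zero =>
    intro w t b hb1 hb2 ht h
    exact aux_V0 hp w t b hb1 hb2 ht (by simpa using h)
  | succ e ih =>
    intro w t b hb1 hb2 ht h
    have hm := Nat.div_add_mod t p
    have hml := Nat.mod_lt t (show 0 < p by omega)
    rw [aux_Vdig_rec hp]
    set t' := t / p
    set t0 := t % p
    have e1 : p ^ (w + 1 + (e + 1)) = p * p ^ (w + 1 + e) := by ring
    have e2 : b * p ^ (e + 1) = p * (b * p ^ e) := by ring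
    rw [e1] at ht h
    rw [e2] at h
    have h1 : t' < p ^ (w + 1 + e) := by
      by_contra hh; push Not at hh
      have := Nat.mul_le_mul_left p hh
      omega
    have h2 : p ^ (w + 1 + e) ≤ t' + b * p ^ e := by
      by_contra hh; push Not at hh
      have := Nat.mul_le_mul_left p (show t' + b * p ^ e + 1 ≤ p ^ (w + 1 + e) by omega)
      rw [mul_add, mul_add] at this
      omega
    have h3 := ih w t' b hb1 hb2 h1 h2
    exact h3.trans (Nat.le_mul_of_pos_left _ (by omega))

theorem aux_VB {p : ℕ} (hp : 2 ≤ p) : ∀ (e w t b : ℕ), 2 ≤ b → b ≤ p → t < p ^ (w + 1 + e) →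
    p ^ (w + 1 + e) + 1 ≤ t + b * p ^ e → (p - b + 2) * p ^ w ≤ Vdig p t := by
  intro e
  induction e with
  | zero =>
    intro w t b hb1 hb2 ht h
    have := aux_V0 hp w t (b - 1) (by omega) (by omega) ht (by simp at h ⊢; omega)
    rwa [show p - (b - 1) + 1 = p - b + 2 by omega] at this
  | succ e ih =>
    intro w t b hb1 hb2 ht h
    have hm := Nat.div_add_mod t p
    have hml := Nat.mod_lt t (show 0 < p by omega)
    rw [aux_Vdig_rec hp]
    set t' := t / p
    set t0 := t % p
    have e1 : p ^ (w + 1 + (e + 1)) = p * p ^ (w + 1 + e) := by ring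
    have e2 : b * p ^ (e + 1) = p * (b * p ^ e) := by ring
    rw [e1] at ht h
    rw [e2] at h
    have h1 : t' < p ^ (w + 1 + e) := by
      by_contra hh; push Not at hh
      have := Nat.mul_le_mul_left p hh
      omega
    have h2 : p ^ (w + 1 + e) ≤ t' + b * p ^ e := by
      by_contra hh; push Not at hh
      have := Nat.mul_le_mul_left p (show t' + b * p ^ e + 1 ≤ p ^ (w + 1 + e) by omega)
      rw [mul_add, mul_add] at this
      omega
    rcases Nat.lt_or_ge (p ^ (w + 1 + e)) (t' + b * p ^ e) with h3 | h3
    · have h4 := ih w t' b hb1 hb2 h1 h3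
      exact h4.trans (Nat.le_mul_of_pos_left _ (by omega))
    · have h4 := aux_VA hp e w t' b (by omega) hb2 h1 h2
      have h5 : 1 ≤ t0 := by
        have h6 : p ^ (w + 1 + e) = t' + b * p ^ e := le_antisymm h2 h3
        rw [h6, mul_add] at h
        omega
      calc (p - b + 2) * p ^ w ≤ (2 * (p - b + 1)) * p ^ w := Nat.mul_le_mul_right _ (by omega)
        _ = 2 * ((p - b + 1) * p ^ w) := by ring
        _ ≤ _ := Nat.mul_le_mul (by omega) h4

/-- duality -/
theorem aux_dual {p s i : ℕ} [Fact p.Prime] [CharP K p] (μ : K) (hi : i ≤ p ^ s)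
    (I : Finset ℕ) (hI : ∀ j ∈ I, 0 < j ∧ j < p ^ s)
    (hz : ∀ Q : K[X], Q ∈ degreeLT K (p ^ s - i) → (∀ j ∈ I, ((X - C μ) ^ i * Q).coeff j = 0) →
      ((X - C μ) ^ i * Q).coeff 0 = 0) :
    ∃ W : K[X], W ≠ 0 ∧ W.natDegree < p ^ s ∧ W.support.card ≤ I.card + 1 ∧
      (X - C μ) ^ (p ^ s - i) ∣ W := by
  have hn : 0 < p ^ s := pow_pos (Fact.out : p.Prime).pos s
  have hfr : (X ^ (p ^ s) - C (μ ^ p ^ s) : K[X]) = (X - C μ) ^ (p ^ s) := by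
    rw [sub_pow_char_pow, C_pow]
  set n := p ^ s with hnn
  let φ : ℕ → (degreeLT K (n - i) →ₗ[K] K) := fun j =>
    (lcoeff K j) ∘ₗ (LinearMap.mulLeft K ((X - C μ) ^ i)) ∘ₗ (degreeLT K (n - i)).subtype
  have hφ : ∀ j Q, φ j Q = ((X - C μ) ^ i * (Q : K[X])).coeff j := fun j Q => rfl
  have hmem : φ 0 ∈ Submodule.span K (Set.range (fun j : I => φ j.1)) := by
    apply mem_span_of_iInf_ker_le_ker
    intro Q hQ
    rw [Submodule.mem_iInf] at hQ
    rw [LinearMap.mem_ker, hφ]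
    apply hz _ Q.2
    intro j hj
    have := hQ ⟨j, hj⟩
    rwa [LinearMap.mem_ker, hφ] at this
  obtain ⟨c, hc⟩ := (Submodule.mem_span_range_iff_exists_fun K).mp hmem
  set W : K[X] := monomial (n - 1) 1 - ∑ j : I, monomial (n - 1 - j.1) (c j) with hW
  have hWc : W.coeff (n - 1) = 1 := by
    rw [hW, coeff_sub, coeff_monomial, if_pos rfl, finsetSum_coeff, Finset.sum_eq_zero, sub_zero]
    intro j _
    rw [coeff_monomial, if_neg]
    have := hI j.1 j.2
    omega
  have hW0 : W ≠ 0 := by rintro hh; simp [hh] at hWc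
  have hWd : W.natDegree < n := by
    rw [Nat.lt_iff_le_pred hn, hW]
    apply (natDegree_sub_le _ _).trans
    apply max_le
    · exact natDegree_monomial_le _
    · apply natDegree_sum_le_of_forall_le
      intro j _
      exact (natDegree_monomial_le _).trans (by simp)
  refine ⟨W, hW0, hWd, ?_, ?_⟩
  · classical
    have : W.support ⊆ insert (n - 1) (I.image (fun j => n - 1 - j)) := by
      intro m hm
      by_contra hcon
      simp only [Finset.mem_insert, Finset.mem_image, not_or, not_exists, not_and] at hcon
      rw [mem_support_iff] at hm
      apply hm
      rw [hW, coeff_sub, coeff_monomial, if_neg (fun h => hcon.1 h.symm), finsetSum_coeff,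
        Finset.sum_eq_zero, sub_zero]
      intro j _
      rw [coeff_monomial, if_neg (hcon.2 j.1 j.2)]
    refine (Finset.card_le_card this).trans ((Finset.card_insert_le _ _).trans ?_)
    have := Finset.card_image_le (s := I) (f := fun j => n - 1 - j)
    omega
  · -- coefficients vanish
    have key : ∀ m, i ≤ m → m < n → (W * (X - C μ) ^ i).coeff m = 0 := by
      intro m hm1 hm2
      have hQ : (X ^ (n - 1 - m) : K[X]) ∈ degreeLT K (n - i) := by
        rw [mem_degreeLT, degree_X_pow]
        exact_mod_cast (by omega : n - 1 - m < n - i)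
      have h1 := congrArg (fun f => f ⟨X ^ (n - 1 - m), hQ⟩) hc
      simp only [LinearMap.sum_apply, LinearMap.smul_apply, hφ, smul_eq_mul] at h1
      have hgen : ∀ j a, j < n → (monomial (n - 1 - j) a * (X - C μ) ^ i).coeff m
          = a * ((X - C μ) ^ i * X ^ (n - 1 - m)).coeff j := by
        intro j a hj
        rw [← C_mul_X_pow_eq_monomial, mul_assoc, coeff_C_mul, coeff_X_pow_mul', coeff_mul_X_pow']
        congr 1
        by_cases hle : n - 1 - j ≤ m
        · rw [if_pos hle, if_pos (by omega)]
          congr 1; omega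
        · rw [if_neg hle, if_neg (by omega)]
      have hgen0 := hgen 0 1 hn
      rw [Nat.sub_zero, one_mul] at hgen0
      rw [hW, sub_mul, coeff_sub, hgen0, Finset.sum_mul, finsetSum_coeff, ← h1, sub_eq_zero]
      apply Finset.sum_congr rfl
      intro j _
      rw [hgen j.1 _ (hI j.1 j.2).2]
    set Z := W * (X - C μ) ^ i with hZ
    set B := Z /ₘ (X ^ n - C (μ ^ n)) with hB
    have hmon : (X ^ n - C (μ ^ n) : K[X]).Monic := monic_X_pow_sub_C _ hn.ne'
    have hZd : Z.natDegree < n + i := by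
      refine lt_of_le_of_lt natDegree_mul_le ?_
      simp
      omega
    -- split Z = A + X^n * B'
    set A := Z %ₘ (X ^ n : K[X]) with hA
    set B' := Z /ₘ (X ^ n : K[X]) with hB'
    have hsplit : A + X ^ n * B' = Z := modByMonic_add_div Z _
    have hAc : ∀ m, A.coeff m = if m < n then Z.coeff m else 0 := by
      intro m
      have hAd : A.degree < n := by
        have := degree_modByMonic_lt Z (monic_X_pow (R := K) n)
        rwa [degree_X_pow] at this
      split_ifs with hm
      · rw [← hsplit, coeff_add, coeff_X_pow_mul', if_neg (by omega), add_zero]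
      · exact coeff_eq_zero_of_degree_lt (lt_of_lt_of_le hAd (by exact_mod_cast Nat.not_lt.mp hm))
    have hAz : ∀ m, i ≤ m → A.coeff m = 0 := by
      intro m hm
      rw [hAc]
      split_ifs with h
      · exact key m hm h
      · rfl
    have hBz : ∀ m, i ≤ m → B'.coeff m = 0 := by
      intro m hm
      have h1 : Z.coeff (m + n) = 0 := coeff_eq_zero_of_natDegree_lt (by omega)
      rw [← hsplit, coeff_add, coeff_X_pow_mul, hAc, if_neg (by omega), zero_add] at h1
      exact h1
    have hsum0 : A + C (μ ^ n) * B' = 0 := by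
      apply eq_zero_of_dvd_of_degree_lt (p := (X - C μ) ^ i)
      · have : A + C (μ ^ n) * B' = Z - (X - C μ) ^ n * B' := by
          rw [← hfr, ← hsplit]; ring
        rw [this]
        exact dvd_sub (Dvd.intro_left _ rfl) (Dvd.dvd.mul_right (pow_dvd_pow _ hi) _)
      · rw [degree_pow, degree_X_sub_C, nsmul_one]
        rw [degree_lt_iff_coeff_zero]
        intro m hm
        have hm' : i ≤ m := by exact_mod_cast hm
        rw [coeff_add, coeff_C_mul, hAz m hm', hBz m hm', mul_zero, add_zero]
    have hfin : W * (X - C μ) ^ i = ((X - C μ) ^ (n - i) * B') * (X - C μ) ^ i := by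
      have : (X - C μ) ^ (n - i) * (X - C μ) ^ i = (X - C μ : K[X]) ^ n := by
        rw [← pow_add, Nat.sub_add_cancel hi]
      rw [mul_right_comm, this, ← hfr, ← hZ, ← hsplit, sub_mul]
      linear_combination hsum0
    have := mul_right_cancel₀ (pow_ne_zero _ (X_sub_C_ne_zero μ)) hfin
    exact ⟨_, this⟩

theorem aux_arith {η a b N P c : ℕ} (hη : 0 < η) (ha : 1 ≤ a) (hc : 1 ≤ c) (hN : 0 < N) (hP : 0 < P)
    (h : η * (a * N + b) * ((c + 1) * P) + 1 < η * ((a + c) * N * P) + (c + 1) * P) :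
    b = 0 ∧ (a = 1 ∨ (a = 2 ∧ η = 1 ∧ N = 1)) := by
  obtain ⟨a, rfl⟩ := Nat.exists_eq_add_of_le' ha
  have h1 : (η * a * c * N + η * b * (c + 1)) * P < (c + 1) * P := by nlinarith
  have h2 := Nat.lt_of_mul_lt_mul_right h1
  have hb : b = 0 := by
    by_contra hb
    have : 1 ≤ η * b := Nat.mul_pos hη (Nat.pos_of_ne_zero hb)
    have := Nat.mul_le_mul_right (c + 1) this
    omega
  refine ⟨hb, ?_⟩
  subst hb
  rcases a with _ | _ | a
  · left; rfl
  · right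
    have h3 : η * N * c < c + 1 := by nlinarith
    have h4 : η * N < 2 := by
      by_contra hh; push Not at hh
      have := Nat.mul_le_mul_right c hh
      omega
    have h5 : η * N = 1 := by
      have := Nat.mul_pos hη hN
      omega
    refine ⟨rfl, Nat.eq_one_of_mul_eq_one_right h5, Nat.eq_one_of_mul_eq_one_left h5⟩
  · exfalso
    have h3 : 1 ≤ η * N := Nat.mul_pos hη hN
    have h4 : (a + 1 + 1) * c ≤ (η * N) * ((a + 1 + 1) * c) := Nat.le_mul_of_pos_left _ h3
    nlinarith

end helpers

section helpers2
variable {K : Type} [Field K]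

theorem aux_poly_coeff {n : ℕ} (c : Fin n → K) (j : Fin n) :
    (∑ j : Fin n, C (c j) * X ^ (j : ℕ)).coeff (j : ℕ) = c j := by
  rw [finsetSum_coeff, Finset.sum_eq_single j]
  · simp
  · intro b _ hb
    rw [coeff_C_mul_X_pow, if_neg]
    intro h; exact hb (Fin.ext h.symm)
  · simp

theorem aux_poly_of {n : ℕ} (R : K[X]) (hR : R.natDegree < n) :
    (∑ j : Fin n, C (R.coeff j) * X ^ (j : ℕ)) = R := by
  rw [Fin.sum_univ_eq_sum_range (fun j => C (R.coeff j) * X ^ j)]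
  conv_rhs => rw [R.as_sum_range' n hR]
  simp only [C_mul_X_pow_eq_monomial]

theorem aux_mem_code [Fintype K] [DecidableEq K] {n : ℕ} (l : K) (g R : K[X])
    (hR : R.natDegree < n) (hd : g ∣ R) :
    (fun j : Fin n => R.coeff j) ∈ codeOfGen n l g := by
  unfold codeOfGen
  rw [Set.mem_setOf_eq, aux_poly_of R hR]
  exact Ideal.mem_of_dvd _ hd (Ideal.subset_span (by simp))

theorem aux_code_dvd [Fintype K] [DecidableEq K] {n : ℕ} (l : K) (g : K[X])
    (hg : g ∣ X ^ n - C l) (c : Fin n → K) (hc : c ∈ codeOfGen n l g) :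
    g ∣ ∑ j : Fin n, C (c j) * X ^ (j : ℕ) := by
  unfold codeOfGen at hc
  rw [Set.mem_setOf_eq, Ideal.mem_span_pair] at hc
  obtain ⟨a, b, h⟩ := hc
  rw [← h]
  exact dvd_add (Dvd.intro_left _ rfl) (Dvd.dvd.mul_left hg _)

theorem aux_card [Fintype K] [DecidableEq K] {n : ℕ} (l : K) (g : K[X])
    (hm : g.Monic) (hg : g ∣ X ^ n - C l) (hn : g.natDegree < n) :
    Nat.card (codeOfGen n l g) ≤ Fintype.card K ^ (n - g.natDegree) := by
  have : Nat.card (Fin (n - g.natDegree) → K) = Fintype.card K ^ (n - g.natDegree) := by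
    simp
  rw [← this]
  have hdeg : ∀ c : Fin n → K, (∑ j : Fin n, C (c j) * X ^ (j : ℕ)).natDegree < n := by
    intro c
    rw [Nat.lt_iff_le_pred (by omega)]
    apply natDegree_sum_le_of_forall_le
    intro j _
    refine (natDegree_C_mul_X_pow_le _ _).trans ?_
    have := j.2
    omega
  have hdm : ∀ c ∈ codeOfGen n l g, ∀ P : K[X], P = (∑ j : Fin n, C (c j) * X ^ (j : ℕ)) →
      P = g * (P /ₘ g) := by
    intro c hc P hP
    have h0 := (modByMonic_eq_zero_iff_dvd hm).mpr (aux_code_dvd l g hg c hc)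
    rw [← hP] at h0
    have := modByMonic_add_div P g
    rw [h0, zero_add] at this
    exact this.symm
  apply Nat.card_le_card_of_injective (fun c : codeOfGen n l g => fun j : Fin (n - g.natDegree) =>
    ((∑ j : Fin n, C (c.1 j) * X ^ (j : ℕ)) /ₘ g).coeff j)
  intro c c' h
  have hq : (∑ j : Fin n, C (c.1 j) * X ^ (j : ℕ)) /ₘ g =
      (∑ j : Fin n, C (c'.1 j) * X ^ (j : ℕ)) /ₘ g := by
    ext j
    by_cases hj : j < n - g.natDegree
    · exact congrFun h ⟨j, hj⟩
    · rw [coeff_eq_zero_of_natDegree_lt, coeff_eq_zero_of_natDegree_lt]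
      · rw [natDegree_divByMonic _ hm]
        have := hdeg c'.1
        omega
      · rw [natDegree_divByMonic _ hm]
        have := hdeg c.1
        omega
  have hp : (∑ j : Fin n, C (c.1 j) * X ^ (j : ℕ)) = (∑ j : Fin n, C (c'.1 j) * X ^ (j : ℕ)) := by
    rw [hdm c.1 c.2 _ rfl, hdm c'.1 c'.2 _ rfl, hq]
  apply Subtype.ext
  funext j
  rw [← aux_poly_coeff c.1 j, ← aux_poly_coeff c'.1 j, hp]

theorem aux_locality [Fintype K] [DecidableEq K] {p : ℕ} [Fact p.Prime] [CharP K p]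
    {η s i D r : ℕ} (hη : 0 < η) (l : K) (hl : l ≠ 0) (hi : i < p ^ s)
    (hD : ∀ t, p ^ s - i ≤ t → t < p ^ s → D ≤ Vdig p t)
    (hloc : hasAllSymbolLocality (Ci p η s i l) r) : D ≤ r + 1 := by
  classical
  have hps : 0 < p ^ s := by omega
  have hn : 0 < η * p ^ s := Nat.mul_pos hη hps
  obtain ⟨I, h0I, hIr, f, hf⟩ := hloc ⟨0, hn⟩
  set I' : Finset ℕ := (I.filter (fun j => η ∣ j.1)).image (fun j => j.1 / η) with hI'
  have hI'c : I'.card ≤ r :=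
    (Finset.card_image_le.trans (Finset.card_filter_le _ _)).trans hIr
  obtain ⟨W, hW0, hWd, hWs, hWdv⟩ := aux_dual (p := p) (s := s) (i := i) l hi.le I' (by
    intro j hj
    rw [hI', Finset.mem_image] at hj
    obtain ⟨a, ha, rfl⟩ := hj
    rw [Finset.mem_filter] at ha
    constructor
    · apply Nat.div_pos _ hη
      apply Nat.le_of_dvd _ ha.2
      rw [Nat.pos_iff_ne_zero]
      intro h
      apply h0I
      have : a = ⟨0, hn⟩ := Fin.ext h
      rw [← this]; exact ha.1
    · exact Nat.div_lt_of_lt_mul a.2) (by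
    intro Q hQ hv
    set h := (X - C l) ^ i * Q with hh
    have hdeg : h.natDegree < p ^ s := by
      by_cases hQ0 : Q = 0
      · simp [hh, hQ0, hps]
      · rw [mem_degreeLT, ← natDegree_lt_iff_degree_lt hQ0] at hQ
        have := natDegree_mul_le (p := (X - C l) ^ i) (q := Q)
        rw [← hh, natDegree_pow, natDegree_X_sub_C, mul_one] at this
        omega
    have hcd : (expand K η h).natDegree < η * p ^ s := by
      rw [natDegree_expand, mul_comm]
      exact Nat.mul_lt_mul_of_pos_left hdeg hη
    have hcm : (fun j : Fin (η * p ^ s) => (expand K η h).coeff j) ∈ Ci p η s i l := by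
      apply aux_mem_code _ _ _ hcd
      refine ⟨expand K η Q, ?_⟩
      rw [hh]; simp
    have hzm : (fun j : Fin (η * p ^ s) => (0 : K[X]).coeff j) ∈ Ci p η s i l :=
      aux_mem_code _ _ _ (by simpa using hn) (dvd_zero _)
    have e1 := hf _ hcm
    have e2 := hf _ hzm
    have e3 : (fun j : {x // x ∈ I} => (expand K η h).coeff (j.1 : ℕ)) =
        (fun j : {x // x ∈ I} => (0 : K[X]).coeff (j.1 : ℕ)) := by
      funext j
      rw [coeff_expand hη, coeff_zero]
      split_ifs with hd
      · apply hv
        rw [hI', Finset.mem_image]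
        exact ⟨j.1, by rw [Finset.mem_filter]; exact ⟨j.2, hd⟩, rfl⟩
      · rfl
    simp only at e1 e2
    rw [e3, ← e2, coeff_zero, coeff_expand hη] at e1
    simpa using e1)
  have h1 := aux_massey (p := p) W.natDegree W l hl le_rfl hW0
  have h2 : p ^ s - i ≤ W.rootMultiplicity l := (le_rootMultiplicity_iff hW0).mpr hWdv
  have h3 : W.rootMultiplicity l < p ^ s := by
    have := natDegree_le_of_dvd (pow_rootMultiplicity_dvd W l) hW0
    simp at this
    omega
  have := hD _ h2 h3
  omega

end helpers2

theorem stmt17 {p m : ℕ} (hp : p.Prime) (hm : 1 ≤ m)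
    {F : Type} [Field F] [Fintype F] [DecidableEq F] (hcard : Fintype.card F = p ^ m)
    (s : ℕ) (hs : 2 ≤ s) (η : ℕ) (hη : 0 < η) (hcop : Nat.Coprime η p)
    (lam0 : F) (hlam0 : lam0 ≠ 0) (hirr : Irreducible (X ^ η - Polynomial.C lam0))
    (i : ℕ) (hi1 : 1 ≤ i) (hi2 : i ≤ p ^ (s - 1) - 1)
    (hopt : optimalLRC (Ci p η s i lam0)) :
    (∃ k : ℕ, 1 ≤ k ∧ k ≤ s - 1 ∧ i = p ^ (s - k - 1)) ∨
    (i = 2 ∧ η = 1 ∧ p ≠ 2) := by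
  haveI : Fact p.Prime := ⟨hp⟩
  haveI : CharP F p := charP_of_card_eq_prime_pow hcard
  have hp2 := hp.two_le
  obtain ⟨k, d, r, hk, hd, hr, heq⟩ := hopt
  have hps1 : 0 < p ^ (s - 1) := pow_pos hp.pos _
  have his : i < p ^ (s - 1) := by omega
  have hpss : p ^ (s - 1) < p ^ s := Nat.pow_lt_pow_right hp.one_lt (by omega)
  have hn : 0 < η * p ^ s := Nat.mul_pos hη (by omega)
  have hfr : ∀ u : ℕ, (X ^ (η * p ^ u) - C (lam0 ^ p ^ u) : F[X]) = (X ^ η - C lam0) ^ (p ^ u) := by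
    intro u
    rw [sub_pow_char_pow, C_pow, pow_mul]
  -- distance
  have hd2 : d ≤ 2 := by
    set R : F[X] := X ^ (η * p ^ (s - 1)) - C (lam0 ^ p ^ (s - 1)) with hR
    have hlt : η * p ^ (s - 1) < η * p ^ s := Nat.mul_lt_mul_of_pos_left hpss hη
    have hpos : 0 < η * p ^ (s - 1) := Nat.mul_pos hη hps1
    have hRd : R.natDegree < η * p ^ s := by
      rw [hR, natDegree_X_pow_sub_C]; exact hlt
    have hmem : (fun j : Fin (η * p ^ s) => R.coeff j) ∈ Ci p η s i lam0 := by
      apply aux_mem_code _ _ _ hRd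
      rw [hR, hfr]
      exact pow_dvd_pow _ his.le
    have hRc : ∀ j, R.coeff j = (if j = η * p ^ (s - 1) then 1 else 0) -
        (if j = 0 then lam0 ^ p ^ (s - 1) else 0) := by
      intro j
      rw [hR, coeff_sub, coeff_X_pow, coeff_C]
    have hne : (fun j : Fin (η * p ^ s) => R.coeff j) ≠ 0 := by
      intro h
      have := congrFun h ⟨η * p ^ (s - 1), hlt⟩
      simp only [hRc, Pi.zero_apply] at this
      rw [if_neg hpos.ne'] at this
      simp at this
    refine (hd.2 ⟨_, hmem, hne, rfl⟩).trans ?_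
    have hsub : (Finset.univ.filter (fun j : Fin (η * p ^ s) => R.coeff j ≠ 0)) ⊆
        {⟨η * p ^ (s - 1), hlt⟩, ⟨0, hn⟩} := by
      intro j hj
      rw [Finset.mem_filter] at hj
      by_contra hcon
      simp only [Finset.mem_insert, Finset.mem_singleton, not_or, Fin.ext_iff] at hcon
      apply hj.2
      rw [hRc, if_neg hcon.1, if_neg hcon.2, sub_zero]
    exact (Finset.card_le_card hsub).trans Finset.card_le_two
  -- dimension
  have hgm : ((X ^ η - C lam0) ^ i : F[X]).Monic := (monic_X_pow_sub_C _ hη.ne').pow i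
  have hgd : ((X ^ η - C lam0) ^ i : F[X]).natDegree = η * i := by
    rw [natDegree_pow, natDegree_X_pow_sub_C, mul_comm]
  have hin : η * i < η * p ^ s := Nat.mul_lt_mul_of_pos_left (by omega) hη
  have hkle : k + η * i ≤ η * p ^ s := by
    have h1 := aux_card (n := η * p ^ s) (lam0 ^ p ^ s) ((X ^ η - C lam0) ^ i) hgm
      (by rw [hfr]; exact pow_dvd_pow _ (by omega)) (by rw [hgd]; exact hin)
    have h2 : Fintype.card F ^ k ≤ Fintype.card F ^ (η * p ^ s - η * i) := by
      rw [← hk, ← hgd]; exact h1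
    have := (Nat.pow_le_pow_iff_right (Fintype.one_lt_card)).mp h2
    omega
  -- leading digit
  set e := Nat.log p i with he
  have hN1 : p ^ e ≤ i := Nat.pow_log_le_self p (by omega)
  have hN2 : i < p ^ (e + 1) := Nat.lt_pow_succ_log_self hp.one_lt i
  have hes : e < s - 1 := (Nat.pow_lt_pow_iff_right hp.one_lt).mp (lt_of_le_of_lt hN1 his)
  have hNpos : 0 < p ^ e := pow_pos hp.pos _
  set a := i / p ^ e with ha
  set b := i % p ^ e with hb
  have hab : p ^ e * a + b = i := Nat.div_add_mod i _
  have hbl : b < p ^ e := Nat.mod_lt _ hNpos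
  have ha1 : 1 ≤ a := Nat.div_pos hN1 hNpos
  have hap : a < p := Nat.div_lt_of_lt_mul (by rw [← pow_succ]; exact hN2)
  obtain ⟨w, hw⟩ : ∃ w, s = w + 1 + e := ⟨s - 1 - e, by omega⟩
  have hPpos : 0 < p ^ w := pow_pos hp.pos _
  have hD : (p - a + 1) * p ^ w ≤ r + 1 := by
    apply aux_locality (p := p) (η := η) (s := s) (i := i) hη lam0 hlam0 (by omega) _ hr.1
    intro t ht1 ht2
    have := aux_VB hp2 e w t (a + 1) (by omega) (by omega) (by rw [← hw]; exact ht2) (by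
      rw [← hw, add_mul, one_mul, mul_comm a]
      omega)
    rwa [show p - (a + 1) + 2 = p - a + 1 by omega] at this
  obtain ⟨c, hc⟩ : ∃ c, p = a + c := ⟨p - a, by omega⟩
  have hc1 : 1 ≤ c := by omega
  rw [show p - a + 1 = c + 1 by omega] at hD
  have hr1 : 1 ≤ r := by
    have : 2 * 1 ≤ (c + 1) * p ^ w := Nat.mul_le_mul (by omega) hPpos
    omega
  have hceil : (η * p ^ s - k) * r ≤ k + r - 1 := by
    have h1 : η * p ^ s - k ≤ (k + r - 1) / r := by
      unfold nceil at heq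
      omega
    exact (Nat.le_div_iff_mul_le (by omega)).mp h1
  have hi0 : 1 ≤ η * i := Nat.mul_pos hη (by omega)
  have hfin : η * i * ((c + 1) * p ^ w) + 1 < η * p ^ s + (c + 1) * p ^ w := by
    obtain ⟨E, hE⟩ : ∃ E, η * i = E + 1 := ⟨η * i - 1, by omega⟩
    obtain ⟨D', hD'⟩ : ∃ D', (c + 1) * p ^ w = D' + 1 :=
      ⟨(c + 1) * p ^ w - 1, (Nat.sub_add_cancel (Nat.mul_pos (by omega) hPpos)).symm⟩
    have h1 : (E + 1) * r ≤ (η * p ^ s - k) * r := Nat.mul_le_mul_right _ (by omega)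
    have h2 : E * D' ≤ E * r := Nat.mul_le_mul_left _ (by omega)
    have h3 : (E + 1) * r = E * r + r := by ring
    have h4 : (E + 1) * (D' + 1) = E * D' + E + D' + 1 := by ring
    rw [hE, hD', h4]
    omega
  have hpow : p ^ s = (a + c) * p ^ e * p ^ w := by
    rw [← hc, hw]; ring
  rw [hpow, ← hab, mul_comm (p ^ e) a] at hfin
  obtain ⟨hb0, h⟩ := aux_arith hη ha1 hc1 hNpos hPpos hfin
  rw [hb0, add_zero] at hab
  rcases h with h1 | ⟨h2, h3, h4⟩
  · left
    refine ⟨s - 1 - e, by omega, by omega, ?_⟩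
    rw [show s - (s - 1 - e) - 1 = e by omega, ← hab, h1, mul_one]
  · right
    refine ⟨?_, h3, by omega⟩
    rw [← hab, h2, h4]
end

section
/- Let p be a prime, m ≥ 1, s ≥ 1, η a positive integer coprime to p, λ_0 a nonzero element of F_{p^m} such that x^η − λ_0 is irreducible over F_{p^m}, and let p^{s−1} + 1 ≤ i ≤ p^s − p^{s−1}. If the code C_i(η, p^s, λ_0) is an optimal LRC, then p is odd, η = 1, and moreover if s ≥ 2 then i = p^{s−1} + 1 (while for s = 1, i may be any value with 2 ≤ i ≤ p − 1). -/
open Polynomial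

variable {F : Type} [Field F] [Fintype F] [DecidableEq F]

section helpers

theorem aux_weight {F : Type} [Field F] (p : ℕ) (hp : p.Prime) [CharP F p] (μ : F) (hμ : μ ≠ 0)
    (b : ℕ) : ∀ h : F[X], h ≠ 0 → (∀ t ∈ h.support, t < p) → (X - C μ) ^ b ∣ h →
      b < h.support.card := by
  induction b with
  | zero =>
    intro h h0 _ _
    exact Finset.card_pos.mpr (Polynomial.support_nonempty.mpr h0)
  | succ b ih =>
    intro h h0 hlt hdvd
    obtain ⟨v, hv⟩ := Polynomial.support_nonempty.mpr h0
    set g : F[X] := X * derivative h - C (v : F) * h with hg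
    have hco : ∀ t, g.coeff t = ((t : F) - v) * h.coeff t := by
      intro t
      rw [hg, coeff_sub, coeff_C_mul]
      cases t with
      | zero => simp
      | succ t => rw [coeff_X_mul, coeff_derivative]; push_cast; ring
    have hsub : g.support ⊆ h.support.erase v := by
      intro t ht
      rw [mem_support_iff, hco] at ht
      rw [Finset.mem_erase, mem_support_iff]
      refine ⟨?_, right_ne_zero_of_mul ht⟩
      rintro rfl
      simp at ht
    have hg0 : g ≠ 0 := by
      intro hz
      have hmon : h = C (h.coeff v) * X ^ v := by
        ext t
        rw [coeff_C_mul_X_pow]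
        split_ifs with htv
        · rw [htv]
        · by_contra hne
          have h1 := hco t
          rw [hz, coeff_zero] at h1
          have h2 : (t : F) - v = 0 := by
            rcases mul_eq_zero.mp h1.symm with h3 | h3
            · exact h3
            · exact absurd h3 hne
          have h3 : (t : F) = v := sub_eq_zero.mp h2
          have h4 := (CharP.natCast_eq_natCast F p).mp h3
          exact htv (Nat.ModEq.eq_of_lt_of_lt h4 (hlt t (mem_support_iff.mpr hne)) (hlt v hv))
      have hr : h.eval μ = 0 := by
        obtain ⟨u, hu⟩ := hdvd
        rw [hu]; simp
      rw [hmon] at hr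
      simp only [eval_mul, eval_C, eval_pow, eval_X] at hr
      rcases mul_eq_zero.mp hr with h3 | h3
      · exact (mem_support_iff.mp hv) h3
      · exact pow_ne_zero v hμ h3
    have hgd : (X - C μ) ^ b ∣ g := by
      refine dvd_sub (Dvd.dvd.mul_left ?_ _) (Dvd.dvd.mul_left ((pow_dvd_pow _ (Nat.le_succ b)).trans hdvd) _)
      have h5 := pow_sub_one_dvd_derivative_of_pow_dvd hdvd
      rw [Nat.add_sub_cancel] at h5
      exact h5
    have := ih g hg0 (fun t ht => hlt t (Finset.mem_of_mem_erase (hsub ht))) hgd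
    have h2 := Finset.card_le_card hsub
    rw [Finset.card_erase_of_mem hv] at h2
    omega

theorem aux_exists {F : Type} [Field F] (p : ℕ) (hp : p.Prime) [CharP F p] (μ : F) (hμ : μ ≠ 0)
    (b : ℕ) (T : Finset ℕ) (hT0 : 0 ∉ T) (hT : T.card + b < p) :
    ∃ h : F[X], h.natDegree < p ∧ (X - C μ) ^ b ∣ h ∧ h.coeff 0 ≠ 0 ∧ ∀ t ∈ T, h.coeff t = 0 := by
  have hp0 := hp.pos
  obtain ⟨T', hTT', hT'p, hT'c⟩ := Finset.exists_subsuperset_card_eq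
    (s := T.filter (· < p)) (t := (Finset.range p).erase 0) (n := p - 1 - b)
    (by intro t ht
        rw [Finset.mem_filter] at ht
        rw [Finset.mem_erase, Finset.mem_range]
        exact ⟨fun h => hT0 (h ▸ ht.1), ht.2⟩)
    (by have := Finset.card_filter_le T (· < p); omega)
    (by rw [Finset.card_erase_of_mem (by simpa using hp0), Finset.card_range]; omega)
  let L : degreeLT F (p - b) →ₗ[F] (T' → F) :=
    { toFun := fun g t => ((X - C μ) ^ b * (g : F[X])).coeff t
      map_add' := by intro x y; ext t; simp [mul_add]
      map_smul' := by intro a x; ext t; simp }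
  have hfr : Module.finrank F (degreeLT F (p - b)) = p - b := by
    rw [(degreeLTEquiv F (p - b)).finrank_eq]; simp
  have : FiniteDimensional F (degreeLT F (p - b)) :=
    Module.Finite.equiv (degreeLTEquiv F (p - b)).symm
  have hker : LinearMap.ker L ≠ ⊥ := by
    apply LinearMap.ker_ne_bot_of_finrank_lt
    rw [hfr, Module.finrank_fintype_fun_eq_card, Fintype.card_coe, hT'c]
    omega
  obtain ⟨g, hgk, hg0⟩ := (Submodule.ne_bot_iff _).mp hker
  have hg0' : (g : F[X]) ≠ 0 := by simpa using hg0
  set h : F[X] := (X - C μ) ^ b * (g : F[X]) with hh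
  have hmonic : ((X - C μ) ^ b).Monic := (monic_X_sub_C μ).pow b
  have hne : h ≠ 0 := mul_ne_zero hmonic.ne_zero hg0'
  have hgdeg : (g : F[X]).natDegree < p - b := by
    rw [natDegree_lt_iff_degree_lt hg0']
    exact mem_degreeLT.mp g.2
  have hdeg : h.natDegree < p := by
    rw [hh, hmonic.natDegree_mul' hg0', natDegree_pow, natDegree_X_sub_C]
    omega
  have hvan : ∀ t ∈ T', h.coeff t = 0 := by
    intro t ht
    have := congrFun (LinearMap.mem_ker.mp hgk) ⟨t, ht⟩
    simpa [L] using this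
  refine ⟨h, hdeg, dvd_mul_right _ _, ?_, ?_⟩
  · intro h0
    have hw := aux_weight p hp μ hμ b h hne
      (fun t ht => (le_natDegree_of_mem_supp t ht).trans_lt hdeg) (dvd_mul_right _ _)
    have hs : h.support ⊆ ((Finset.range p).erase 0) \ T' := by
      intro t ht
      rw [Finset.mem_sdiff, Finset.mem_erase, Finset.mem_range]
      refine ⟨⟨?_, (le_natDegree_of_mem_supp t ht).trans_lt hdeg⟩, ?_⟩
      · rintro rfl; exact (mem_support_iff.mp ht) h0
      · intro h1; exact (mem_support_iff.mp ht) (hvan t h1)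
    have hc := Finset.card_le_card hs
    rw [Finset.card_sdiff_of_subset hT'p, Finset.card_erase_of_mem (by simpa using hp0),
      Finset.card_range, hT'c] at hc
    omega
  · intro t ht
    by_cases htp : t < p
    · exact hvan t (hTT' (Finset.mem_filter.mpr ⟨ht, htp⟩))
    · exact coeff_eq_zero_of_natDegree_lt (by omega)

theorem aux_coeff {F : Type} [Field F] (M : ℕ) (hM : 0 < M) (E h : F[X]) (hE : E.natDegree < M)
    (t : ℕ) : (E * expand F M h).coeff (M * t) = E.coeff 0 * h.coeff t := by
  rw [coeff_mul, Finset.sum_eq_single (0, M * t)]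
  · rw [mul_comm M t, coeff_expand_mul hM]
  · rintro ⟨a, c⟩ hac hne
    rw [Finset.HasAntidiagonal.mem_antidiagonal] at hac
    change a + c = M * t at hac
    change E.coeff a * (expand F M h).coeff c = 0
    by_cases hc : M ∣ c
    · obtain ⟨u, rfl⟩ := hc
      have : E.coeff a = 0 := by
        by_cases ha : a < M
        · exfalso
          have h1 : M ∣ a := (Nat.dvd_add_left (dvd_mul_right M u)).mp (hac ▸ dvd_mul_right M t)
          have h2 : a = 0 := Nat.eq_zero_of_dvd_of_lt h1 ha
          subst h2
          apply hne
          rw [← hac]; simp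
        · exact coeff_eq_zero_of_natDegree_lt (by omega)
      rw [this, zero_mul]
    · rw [coeff_expand hM, if_neg hc, mul_zero]
  · intro hn; simp at hn

theorem aux_sum {F : Type} [Field F] (n : ℕ) (f : F[X]) (hf : f.natDegree < n) :
    (∑ j : Fin n, Polynomial.C (f.coeff j) * X ^ (j : ℕ)) = f := by
  rw [Fin.sum_univ_eq_sum_range (fun j => Polynomial.C (f.coeff j) * X ^ j) n]
  conv_rhs => rw [as_sum_range_C_mul_X_pow' f hf]

theorem aux_mem {F : Type} [Field F] [Fintype F] [DecidableEq F] (p η s i : ℕ) (lam0 : F) (f : F[X])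
    (hf : f.natDegree < η * p ^ s) (hd : (X ^ η - C lam0) ^ i ∣ f) :
    (fun j : Fin (η * p ^ s) => f.coeff j) ∈ Ci p η s i lam0 := by
  show _ ∈ Ideal.span _
  rw [aux_sum _ f hf]
  exact Ideal.mem_of_dvd _ hd (Ideal.subset_span (by simp))

theorem aux_frob {F : Type} [Field F] (p : ℕ) (hp : p.Prime) [CharP F p] (η a : ℕ) (lam0 : F) :
    (X ^ η - C lam0) ^ p ^ a = X ^ (η * p ^ a) - C (lam0 ^ p ^ a) := by
  have := Fact.mk hp
  rw [sub_pow_char_pow, ← pow_mul, C_pow]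

/-- number of codewords -/
theorem aux_card_s18 {F : Type} [Field F] [Fintype F] [DecidableEq F] (p : ℕ) (hp : p.Prime) [CharP F p]
    (η s i : ℕ) (hη : 0 < η) (hi : i ≤ p ^ s) (lam0 : F) :
    Nat.card (Ci p η s i lam0) ≤ Fintype.card F ^ (η * (p ^ s - i)) := by
  have hmon : ((X ^ η - C lam0) ^ i : F[X]).Monic := (monic_X_pow_sub_C lam0 hη.ne').pow i
  have key : ∀ c : Ci p η s i lam0, ∃ u : F[X],
      (∑ j : Fin (η * p ^ s), Polynomial.C (c.1 j) * X ^ (j : ℕ)) = (X ^ η - C lam0) ^ i * u := by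
    intro c
    have hc : _ ∈ Ideal.span _ := c.2
    have hle : Ideal.span {(X ^ η - C lam0) ^ i, X ^ (η * p ^ s) - C (lam0 ^ p ^ s)}
        ≤ Ideal.span {(X ^ η - C lam0) ^ i} := by
      rw [Ideal.span_le]
      intro x hx
      rcases hx with rfl | hx
      · exact Ideal.subset_span rfl
      · rw [Set.mem_singleton_iff] at hx
        rw [hx, ← aux_frob p hp η s lam0]
        exact Ideal.mem_span_singleton.mpr (pow_dvd_pow _ hi)
    exact Ideal.mem_span_singleton.mp (hle hc)
  choose u hu using key
  have hudeg : ∀ c m, η * (p ^ s - i) ≤ m → (u c).coeff m = 0 := by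
    intro c m hm
    by_cases hu0 : u c = 0
    · rw [hu0, coeff_zero]
    apply coeff_eq_zero_of_natDegree_lt
    refine lt_of_lt_of_le ?_ hm
    have hne : (X ^ η - C lam0) ^ i * u c ≠ 0 := mul_ne_zero hmon.ne_zero hu0
    have hd : ((X ^ η - C lam0) ^ i * u c).natDegree < η * p ^ s := by
      rw [natDegree_lt_iff_degree_lt hne, ← hu c]
      exact degree_sum_fin_lt _
    rw [hmon.natDegree_mul' hu0, natDegree_pow, natDegree_X_pow_sub_C] at hd
    rw [Nat.mul_sub]
    have := Nat.mul_comm i η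
    omega
  let φ : Ci p η s i lam0 → (Fin (η * (p ^ s - i)) → F) := fun c m => (u c).coeff m
  have hφ : Function.Injective φ := by
    intro c c' h
    have huu : u c = u c' := by
      ext m
      by_cases hm : m < η * (p ^ s - i)
      · exact congrFun h ⟨m, hm⟩
      · rw [hudeg c m (by omega), hudeg c' m (by omega)]
    have hs : (∑ j : Fin (η * p ^ s), Polynomial.C (c.1 j) * X ^ (j : ℕ)) =
       (∑ j : Fin (η * p ^ s), Polynomial.C (c'.1 j) * X ^ (j : ℕ)) := by rw [hu, hu, huu]
    apply Subtype.ext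
    funext j
    have := congrArg (fun f => coeff f (j : ℕ)) hs
    simpa [finsetSum_coeff, coeff_C_mul, coeff_X_pow, Fin.val_inj] using this
  have := Nat.card_le_card_of_injective φ hφ
  simpa using this

/-- codeword with prescribed zeros -/
theorem aux_word {F : Type} [Field F] [Fintype F] [DecidableEq F] (p : ℕ) (hp : p.Prime) [CharP F p]
    (η s i : ℕ) (hη : 0 < η) (hs : 1 ≤ s) (lam0 : F) (hlam0 : lam0 ≠ 0)
    (b e : ℕ) (he : e < p ^ (s - 1)) (hi : i ≤ p ^ (s - 1) * b + e) (I : Finset ℕ) (hI0 : 0 ∉ I)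
    (hIe : e = 0 ∨ ∀ j ∈ I, η * p ^ (s - 1) ∣ j)
    (hIc : (I.filter (η * p ^ (s - 1) ∣ ·)).card + b < p) :
    ∃ f : F[X], f.natDegree < η * p ^ s ∧ (X ^ η - C lam0) ^ i ∣ f ∧ f.coeff 0 ≠ 0 ∧
      ∀ j ∈ I, f.coeff j = 0 := by
  set P := p ^ (s - 1) with hP
  have hpP : p ^ s = P * p := by
    rw [hP, ← pow_succ]; congr 1; omega
  have hP0 : 0 < P := pow_pos hp.pos _
  set M := η * P with hM
  have hM0 : 0 < M := Nat.mul_pos hη hP0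
  obtain ⟨h, hdeg, hdvd, h0, hv⟩ := aux_exists p hp (lam0 ^ P) (pow_ne_zero _ hlam0) b
    ((I.filter (M ∣ ·)).image (· / M))
    (by
      intro hh
      rw [Finset.mem_image] at hh
      obtain ⟨j, hj, hj2⟩ := hh
      rw [Finset.mem_filter] at hj
      obtain ⟨u, rfl⟩ := hj.2
      rw [Nat.mul_div_cancel_left _ hM0] at hj2
      subst hj2
      exact hI0 (by simpa using hj.1))
    (lt_of_le_of_lt (Nat.add_le_add_right Finset.card_image_le b) hIc)
  have hEdeg : ((X ^ η - C lam0) ^ e : F[X]).natDegree = e * η := by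
    rw [natDegree_pow, natDegree_X_pow_sub_C]
  have hElt : e * η < M := by rw [hM, mul_comm]; exact Nat.mul_lt_mul_of_pos_left he hη
  have hco := aux_coeff M hM0 ((X ^ η - C lam0) ^ e) h (by rw [hEdeg]; exact hElt)
  have hvM : ∀ j ∈ I, M ∣ j → h.coeff (j / M) = 0 := fun j hj hd =>
    hv _ (Finset.mem_image.mpr ⟨j, Finset.mem_filter.mpr ⟨hj, hd⟩, rfl⟩)
  refine ⟨(X ^ η - C lam0) ^ e * expand F M h, ?_, ?_, ?_, ?_⟩
  · refine lt_of_le_of_lt natDegree_mul_le ?_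
    rw [hEdeg, natDegree_expand, hpP, ← mul_assoc η P p, ← hM]
    have : (h.natDegree + 1) * M ≤ p * M := Nat.mul_le_mul_right M hdeg
    rw [mul_comm M p]
    linarith
  · refine (pow_dvd_pow _ hi).trans ?_
    rw [add_comm, pow_add]
    refine mul_dvd_mul_left _ ?_
    obtain ⟨u, hu⟩ := hdvd
    rw [hu, map_mul, map_pow, map_sub, expand_X, expand_C, pow_mul, hP, aux_frob p hp]
    exact dvd_mul_right _ _
  · have := hco 0
    rw [mul_zero] at this
    rw [this]
    refine mul_ne_zero ?_ h0
    rw [coeff_zero_eq_eval_zero]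
    simp [hη.ne', hlam0]
  · intro j hj
    by_cases hd : M ∣ j
    · have h1 := hvM j hj hd
      obtain ⟨t, rfl⟩ := hd
      rw [hco, ← Nat.mul_div_cancel_left t hM0, h1, mul_zero]
    · rcases hIe with he0 | hall
      · rw [he0, pow_zero, one_mul, coeff_expand hM0, if_neg hd]
      · exact absurd (hall j hj) hd

theorem aux_dist {F : Type} [Field F] [Fintype F] [DecidableEq F] (p : ℕ) (hp : p.Prime) [CharP F p]
    (η s i : ℕ) (hη : 0 < η) (hs : 1 ≤ s) (lam0 : F)
    (b d : ℕ) (hi : i ≤ p ^ (s - 1) * b) (hb : b < p) (hd : minDistIs (Ci p η s i lam0) d) :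
    d ≤ b + 1 := by
  set P := p ^ (s - 1) with hP
  have hpP : p ^ s = P * p := by
    rw [hP, ← pow_succ]; congr 1; omega
  have hP0 : 0 < P := pow_pos hp.pos _
  have hM0 : 0 < η * P := Nat.mul_pos hη hP0
  set h : F[X] := (X - C (lam0 ^ P)) ^ b with hh
  have hmon : h.Monic := (monic_X_sub_C _).pow b
  have hhd : h.natDegree = b := by rw [hh, natDegree_pow, natDegree_X_sub_C, mul_one]
  set f : F[X] := expand F (η * P) h with hf
  have hfm : f.Monic := hmon.expand hM0
  have hfd : f.natDegree = b * (η * P) := by rw [hf, natDegree_expand, hhd]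
  have hfd' : f.natDegree < η * p ^ s := by
    rw [hfd, hpP, ← mul_assoc η P p, mul_comm (η * P) p]
    exact Nat.mul_lt_mul_of_pos_right hb hM0
  have hdv : (X ^ η - C lam0) ^ i ∣ f := by
    refine (pow_dvd_pow _ hi).trans ?_
    rw [hf, hh, map_pow, map_sub, expand_X, expand_C, pow_mul, hP, aux_frob p hp]
  have hmem := aux_mem p η s i lam0 f hfd' hdv
  refine (hd.2 ⟨_, hmem, ?_, rfl⟩).trans ?_
  · intro hz
    have h1 := congrFun hz ⟨f.natDegree, hfd'⟩
    simp only [Pi.zero_apply] at h1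
    exact hfm.ne_zero (leadingCoeff_eq_zero.mp h1)
  · unfold hammingNorm
    have : (Finset.univ.filter (fun j : Fin (η * p ^ s) => f.coeff j ≠ 0)).card
        ≤ (Finset.range (b + 1)).card := by
      apply Finset.card_le_card_of_injOn (fun j : Fin (η * p ^ s) => (j : ℕ) / (η * P))
      · intro j hj
        simp only [Finset.coe_filter, Finset.mem_univ, true_and, Set.mem_ofPred_eq] at hj
        simp only [Finset.coe_range, Set.mem_Iio]
        have h1 := le_natDegree_of_ne_zero hj
        rw [hfd] at h1
        have := Nat.div_le_of_le_mul (m := (j : ℕ)) (k := η * P) (n := b) (by rw [mul_comm (η * P) b]; exact h1)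
        omega
      · intro j hj j' hj' hjj
        simp only [Finset.coe_filter, Finset.mem_univ, true_and, Set.mem_ofPred_eq] at hj hj'
        rw [hf, coeff_expand hM0] at hj hj'
        have h1 : η * P ∣ (j : ℕ) := by by_contra hc; simp [hc] at hj
        have h2 : η * P ∣ (j' : ℕ) := by by_contra hc; simp [hc] at hj'
        simp only at hjj
        apply Fin.ext
        rw [← Nat.div_mul_cancel h1, ← Nat.div_mul_cancel h2, hjj]
    simpa using this

theorem aux_loc {F : Type} [Field F] [Fintype F] [DecidableEq F] (p : ℕ) (hp : p.Prime)
    (η s i : ℕ) (hη : 0 < η) (lam0 : F) (γ r : ℕ)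
    (H : ∀ I : Finset ℕ, 0 ∉ I → I.card < γ →
      ∃ f : F[X], f.natDegree < η * p ^ s ∧ (X ^ η - C lam0) ^ i ∣ f ∧ f.coeff 0 ≠ 0 ∧
      ∀ j ∈ I, f.coeff j = 0)
    (hr : hasAllSymbolLocality (Ci p η s i lam0) r) : γ ≤ r := by
  by_contra hlt
  have hn : 0 < η * p ^ s := Nat.mul_pos hη (pow_pos hp.pos _)
  obtain ⟨I, h0, hI, f, hf⟩ := hr ⟨0, hn⟩
  obtain ⟨g, hg, hgd, hg0, hgv⟩ := H (I.image (fun j : Fin (η * p ^ s) => (j : ℕ)))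
    (by
      intro hh
      rw [Finset.mem_image] at hh
      obtain ⟨j, hj, hj0⟩ := hh
      apply h0
      convert hj
      exact hj0.symm)
    (lt_of_le_of_lt Finset.card_image_le (by omega))
  have h1 := hf _ (aux_mem p η s i lam0 g hg hgd)
  have h2 := hf _ (aux_mem p η s i lam0 0 (by simpa using hn) (dvd_zero _))
  have h3 : (fun j : {x // x ∈ I} => g.coeff ((j.1 : Fin _) : ℕ)) =
      (fun j : {x // x ∈ I} => (0 : F[X]).coeff ((j.1 : Fin _) : ℕ)) := by
    funext j
    rw [coeff_zero]
    exact hgv _ (Finset.mem_image.mpr ⟨j.1, j.2, rfl⟩)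
  rw [h3, ← h2] at h1
  simp only [coeff_zero] at h1
  exact hg0 h1

end helpers

/-- Suppose `x^η − λ₀` is irreducible over `F_{p^m}`, `s ≥ 1` and
`p^{s−1} + 1 ≤ i ≤ p^s − p^{s−1}`. If `C_i(η, p^s, λ₀)` is an optimal LRC, then `p` is odd,
`η = 1`, and moreover if `s ≥ 2` then `i = p^{s−1} + 1`. -/
theorem stmt18 {p m : ℕ} (hp : p.Prime) (hm : 1 ≤ m)
    {F : Type} [Field F] [Fintype F] [DecidableEq F] (hcard : Fintype.card F = p ^ m)
    (s : ℕ) (hs : 1 ≤ s) (η : ℕ) (hη : 0 < η) (hcop : Nat.Coprime η p)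
    (lam0 : F) (hlam0 : lam0 ≠ 0) (hirr : Irreducible (X ^ η - Polynomial.C lam0))
    (i : ℕ) (hi1 : p ^ (s - 1) + 1 ≤ i) (hi2 : i ≤ p ^ s - p ^ (s - 1))
    (hopt : optimalLRC (Ci p η s i lam0)) :
    p ≠ 2 ∧ η = 1 ∧ (2 ≤ s → i = p ^ (s - 1) + 1) := by
  have : Fact p.Prime := ⟨hp⟩
  have : CharP F p := charP_of_card_eq_prime_pow hcard
  obtain ⟨k, d, r, hk, hd, hr, heq⟩ := hopt
  have hpP : p ^ s = p ^ (s - 1) * p := by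
    rw [← pow_succ]; congr 1; omega
  have hi3 : i ≤ p ^ s := hi2.trans (Nat.sub_le _ _)
  have hkK : k ≤ η * (p ^ s - i) := by
    have h1 := aux_card_s18 p hp η s i hη hi3 lam0
    rw [hk] at h1
    exact (Nat.pow_le_pow_iff_right Fintype.one_lt_card).mp h1
  have hD := fun b => aux_dist p hp η s i hη hs lam0 b d
  have hW := aux_word p hp η s i hη hs lam0 hlam0
  have hL := fun γ H => aux_loc p hp η s i hη lam0 γ r H hr.1
  have hPs : 2 ≤ s → p ≤ p ^ (s - 1) := fun h => Nat.le_self_pow (by omega) p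
  set P := p ^ (s - 1) with hP
  have hP0 : 0 < P := pow_pos hp.pos _
  set β := (i - 1) / P with hβ
  have hb1 : P * β ≤ i - 1 := Nat.mul_div_le _ _
  have hb2 : i - 1 < P * (β + 1) := Nat.lt_mul_div_succ _ hP0
  have hβ1 : 1 ≤ β := (Nat.one_le_div_iff hP0).mpr (by omega)
  have hβp : β + 1 < p := by
    by_contra hc
    have h1 : P * p ≤ P * (β + 1) := Nat.mul_le_mul_left P (by omega)
    rw [Nat.mul_add, mul_one] at h1
    omega
  have hp2 : p ≠ 2 := by omega
  -- main inequality
  have hmain : ∀ γ : ℕ, 0 < γ → γ ≤ r → p ^ s - i ≤ γ * P → η * (i - P) ≤ β := by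
    intro γ hγ hγr hle
    have hc : nceil k r ≤ η * P := by
      unfold nceil
      rw [← Nat.lt_succ_iff, Nat.div_lt_iff_lt_mul (by omega)]
      have h1 : η * (p ^ s - i) ≤ η * (r * P) :=
        Nat.mul_le_mul_left η (hle.trans (Nat.mul_le_mul_right P hγr))
      have h2 : (η * P).succ * r = η * (r * P) + r := by rw [Nat.succ_mul]; ring
      omega
    have hd' := hD (β + 1) (by omega) hβp hd
    have h3 : η * (p ^ s - i) = η * p ^ s - η * i := Nat.mul_sub _ _ _
    have h4 : η * (i - P) = η * i - η * P := Nat.mul_sub _ _ _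
    have h5 : η * i ≤ η * p ^ s := Nat.mul_le_mul_left η hi3
    omega
  refine ⟨hp2, ?_⟩
  by_cases hcase : i = P * (β + 1)
  · have h1 := hmain (p - (β + 1)) (by omega) (hL _ (by
        intro I hI0 hIc
        refine hW (β + 1) 0 hP0 (by omega) I hI0 (Or.inl rfl) ?_
        have := Finset.card_filter_le I (η * P ∣ ·)
        omega)) (by rw [hpP, hcase, ← Nat.mul_sub, mul_comm])
    have h2 : i - P = P * β := by rw [hcase, Nat.mul_add]; omega
    rw [h2, ← mul_assoc] at h1
    have h3 : η * P ≤ 1 := by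
      by_contra hc
      have : 2 * β ≤ η * P * β := Nat.mul_le_mul_right β (by omega)
      omega
    have h4 : η ≤ η * P := Nat.le_mul_of_pos_right η hP0
    have h5 : P ≤ η * P := Nat.le_mul_of_pos_left P hη
    refine ⟨by omega, fun h => ?_⟩
    have := hPs h
    omega
  · have h1 := hmain (p - β) (by omega) (hL _ (by
        intro I hI0 hIc
        by_cases hall : ∀ j ∈ I, η * P ∣ j
        · refine hW β (P - 1) (by omega) (by rw [Nat.mul_add] at hb2 hcase; omega) I hI0 (Or.inr hall) ?_
          have := Finset.card_filter_le I (η * P ∣ ·)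
          omega
        · refine hW (β + 1) 0 hP0 (by omega) I hI0 (Or.inl rfl) ?_
          push Not at hall
          obtain ⟨j, hj, hjd⟩ := hall
          have : (I.filter (η * P ∣ ·)).card < I.card := by
            apply Finset.card_lt_card
            rw [Finset.filter_ssubset]
            exact ⟨j, hj, hjd⟩
          omega)) (by rw [hpP, mul_comm (p - β), Nat.mul_sub]; omega)
    have h6 : i - P ≤ η * (i - P) := Nat.le_mul_of_pos_left _ hη
    have h7 : η * 1 ≤ η * (i - P) := Nat.mul_le_mul_left η (by omega)
    have hs2 : 2 ≤ s := by
      by_contra hc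
      have : P = 1 := by rw [hP, show s - 1 = 0 by omega, pow_zero]
      rw [this] at hb1 hb2 hcase
      omega
    have h8 := hPs hs2
    have hβe : β = 1 := by
      by_contra hc
      obtain ⟨a, ha⟩ : ∃ a, β = a + 2 := ⟨β - 2, by omega⟩
      have h9 : 3 * (a + 1) ≤ P * (a + 1) := Nat.mul_le_mul_right _ (by omega)
      have h10 : P * β = P * (a + 1) + P := by rw [ha]; ring
      omega
    rw [hβe] at h1
    exact ⟨by omega, fun _ => by omega⟩
end
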